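/- arXiv:2009.06189 — 2 statements merged into one kernel-verified Lean document; each statement's English description precedes it below -/
import Mathlib

section
/- Suppose b is Diophantine with exponent r and θ is non-resonant with respect to b. Let E ∈ ℝ with L(E) > 0, and let u : ℤ → ℝ be a nonzero generalized eigenfunction, i.e. u_{n+1} + u_{n−1} + v(nb+θ)u_n = E u_n for all n ∈ ℤ and |u_n| ≤ C(1+|n|)^δ for some constants C, δ and all n. Then u decays exponentially: for every ε with 0 < ε < L(E)/3 there exists N such that |u_n| ≤ 2C(2|n|+1)^δ e^{−((L(E)−ε)/5)(|n|−1)} for all n with |n| > N; in particular u ∈ ℓ²(ℤ), so E is an eigenvalue of H_{α,θ,b} with exponentially decaying eigenfunction. -/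
open scoped Real

/-- The quasi-periodic potential `v(x) = 2λcos(2πx)/(1 - αcos(2πx))`. -/
noncomputable def potV (α lam : ℝ) (x : ℝ) : ℝ :=
  2 * lam * Real.cos (2 * Real.pi * x) / (1 - α * Real.cos (2 * Real.pi * x))

/-- One-step transfer matrix `A(x,z) = [[z - V x, -1],[1,0]]`. -/
noncomputable def tMat (V : ℝ → ℝ) (x : ℝ) (z : ℂ) : Matrix (Fin 2) (Fin 2) ℂ :=
  !![z - (V x : ℝ), -1; 1, 0]

/-- The `n`-step transfer matrix `A_n(x,z) = A(x+(n-1)b,z) ⋯ A(x+b,z) A(x,z)`. -/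
noncomputable def tProd (V : ℝ → ℝ) (b : ℝ) (n : ℕ) (x : ℝ) (z : ℂ) :
    Matrix (Fin 2) (Fin 2) ℂ :=
  (((List.range n).reverse).map (fun j => tMat V (x + (j : ℝ) * b) z)).prod

/-- The operator norm of a 2×2 complex matrix, acting on the Euclidean space `ℂ²`. -/
noncomputable def opNorm2 (M : Matrix (Fin 2) (Fin 2) ℂ) : ℝ :=
  ‖Matrix.toEuclideanCLM (𝕜 := ℂ) M‖

/-- The Lyapunov exponent `L(z) = lim_n (1/n)∫₀¹ log‖A_n(x,z)‖ dx`; the limit exists and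
equals `inf_{n ≥ 1} (1/n)∫₀¹ log‖A_n(x,z)‖ dx` by subadditivity, so we take that as the
definition. -/
noncomputable def lyap (V : ℝ → ℝ) (b : ℝ) (z : ℂ) : ℝ :=
  ⨅ n : ℕ+, ((n : ℝ))⁻¹ * ∫ x in (0:ℝ)..(1:ℝ), Real.log (opNorm2 (tProd V b n x z))

/-- `IsSchrodingerOp V b θ H` says that `H` is the bounded operator on `ℓ²(ℤ)` given by
`(Hu)ₙ = u_{n+1} + u_{n-1} + V(nb+θ)uₙ`. -/
def IsSchrodingerOp (V : ℝ → ℝ) (b θ : ℝ)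
    (H : lp (fun _ : ℤ => ℂ) 2 →L[ℂ] lp (fun _ : ℤ => ℂ) 2) : Prop :=
  ∀ u : lp (fun _ : ℤ => ℂ) 2, ∀ n : ℤ,
    (H u : ∀ _ : ℤ, ℂ) n = (u : ∀ _ : ℤ, ℂ) (n + 1) + (u : ∀ _ : ℤ, ℂ) (n - 1)
      + (V ((n : ℝ) * b + θ) : ℂ) * (u : ∀ _ : ℤ, ℂ) n

/-- `b` is Diophantine with exponent `r > 1`: there is `c > 0` with
`|sin(2πnb)| > c/|n|^r` for every nonzero integer `n`. -/
def DiophantineExp (b r : ℝ) : Prop :=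
  1 < r ∧ ∃ c > (0 : ℝ), ∀ n : ℤ, n ≠ 0 →
    c / |(n : ℝ)| ^ r < |Real.sin (2 * Real.pi * (n : ℝ) * b)|

/-- `θ` is non-resonant with respect to `b` (with Diophantine exponent `r`):
`|sin(2π(θ + nb/2))| < e^{-|n|^{1/(2r)}}` for at most finitely many `n ∈ ℤ`. -/
def NonResonant (b r θ : ℝ) : Prop :=
  {n : ℤ | |Real.sin (2 * Real.pi * (θ + (n : ℝ) * b / 2))|
      < Real.exp (-(|(n : ℝ)| ^ (1 / (2 * r))))}.Finite

open scoped Real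

lemma geom_bound (z : ℂ) (hz : ‖z‖ = 1) (h1 : z ≠ 1) (N : ℕ) :
    ‖∑ j ∈ Finset.range N, z ^ j‖ ≤ 2 / ‖z - 1‖ := by
  rw [geom_sum_eq h1, norm_div]
  gcongr
  calc ‖z ^ N - 1‖ ≤ ‖z ^ N‖ + ‖(1:ℂ)‖ := norm_sub_le _ _
    _ = 2 := by rw [norm_pow, hz]; norm_num

lemma weyl_circle (b : ℝ) (hb : Irrational b) (f : C(UnitAddCircle, ℂ)) :
    ∀ ε > 0, ∃ C : ℝ, 0 ≤ C ∧ ∀ (N : ℕ) (x : UnitAddCircle),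
      ‖∑ j ∈ Finset.range N, f (x + j • (b : UnitAddCircle)) - N * ∫ y, f y ∂AddCircle.haarAddCircle‖
        ≤ ε * N + C := by
  let S : Submodule ℂ C(UnitAddCircle, ℂ) :=
    { carrier := {f | ∀ ε > 0, ∃ C : ℝ, 0 ≤ C ∧ ∀ (N : ℕ) (x : UnitAddCircle),
        ‖∑ j ∈ Finset.range N, f (x + j • (b : UnitAddCircle)) - N * ∫ y, f y ∂AddCircle.haarAddCircle‖
          ≤ ε * N + C}
      add_mem' := by
        intro f g hf hg ε hε
        obtain ⟨C, hC, h1⟩ := hf (ε/2) (by linarith)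
        obtain ⟨D, hD, h2⟩ := hg (ε/2) (by linarith)
        refine ⟨C + D, by linarith, fun N x => ?_⟩
        have e : ∫ y, (f + g) y ∂(AddCircle.haarAddCircle (T := 1)) =
            ∫ y, f y ∂AddCircle.haarAddCircle + ∫ y, g y ∂AddCircle.haarAddCircle := by
          apply MeasureTheory.integral_add
          · exact f.continuous.integrable_of_hasCompactSupport (HasCompactSupport.of_compactSpace _)
          · exact g.continuous.integrable_of_hasCompactSupport (HasCompactSupport.of_compactSpace _)
        rw [e]
        have := norm_add_le (∑ j ∈ Finset.range N, f (x + j • (b : UnitAddCircle)) - N * ∫ y, f y ∂AddCircle.haarAddCircle) (∑ j ∈ Finset.range N, g (x + j • (b : UnitAddCircle)) - N * ∫ y, g y ∂AddCircle.haarAddCircle)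
        have h1 := h1 N x
        have h2 := h2 N x
        simp only [ContinuousMap.add_apply, Finset.sum_add_distrib]
        calc _ = _ := by congr 1; ring
          _ ≤ _ := this
          _ ≤ _ := by linarith
      zero_mem' := by
        intro ε hε
        refine ⟨0, le_rfl, fun N x => ?_⟩
        simp; positivity
      smul_mem' := by
        intro c f hf ε hε
        obtain ⟨C, hC, h1⟩ := hf (ε/(‖c‖+1)) (by positivity)
        refine ⟨‖c‖ * C, by positivity, fun N x => ?_⟩
        have h1 := h1 N x
        simp only [ContinuousMap.smul_apply, smul_eq_mul, MeasureTheory.integral_const_mul, ← Finset.mul_sum]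
        rw [show ∀ a d : ℂ, c * a - N * (c * d) = c * (a - N * d) by intros; ring, norm_mul]
        calc _ ≤ ‖c‖ * (ε / (‖c‖ + 1) * N + C) := by gcongr
          _ = (‖c‖ / (‖c‖ + 1)) * (ε * N) + ‖c‖ * C := by ring
          _ ≤ 1 * (ε * N) + ‖c‖ * C := by
            gcongr
            rw [div_le_one (by positivity)]; linarith
          _ = _ := by ring }
  have hS : Submodule.span ℂ (Set.range (@fourier 1)) ≤ S := by
    rw [Submodule.span_le]
    rintro _ ⟨n, rfl⟩ ε hε
    have hI : ∫ y, (fourier n y) ∂(AddCircle.haarAddCircle (T := 1)) = if n = 0 then 1 else 0 := by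
      have := congrFun (fourierCoeff_fourier (T := 1) n) 0
      simp only [fourierCoeff, neg_zero, fourier_zero, one_smul] at this
      rw [this]
      by_cases h : n = 0
      · subst h; simp
      · rw [if_neg h, Pi.single_eq_of_ne (Ne.symm h)]
    rw [hI]
    by_cases h : n = 0
    · subst h
      refine ⟨0, le_rfl, fun N x => ?_⟩
      simp; positivity
    · set z : ℂ := fourier n (b : UnitAddCircle) with hz
      have hz1 : ‖z‖ = 1 := by rw [hz, fourier_apply]; exact Circle.norm_coe _
      have hz2 : z ≠ 1 := by
        rw [hz, fourier_coe_apply]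
        intro h2
        rw [Complex.exp_eq_one_iff] at h2
        obtain ⟨m, hm⟩ := h2
        have h3 : (n : ℂ) * b = m := by
          have hpi : (2 * π * Complex.I : ℂ) ≠ 0 := by
            simp [Real.pi_ne_zero]
          apply mul_left_cancel₀ hpi
          rw [mul_comm _ (m:ℂ), ← hm]
          push_cast; ring
        have h4 : (n : ℝ) * b = m := by exact_mod_cast h3
        exact (hb.intCast_mul h).ne_int m h4
      refine ⟨2 / ‖z - 1‖, by positivity, fun N x => ?_⟩
      rw [if_neg h, mul_zero, sub_zero]
      have : ∀ j : ℕ, fourier n (x + j • (b : UnitAddCircle)) = fourier n x * z ^ j := by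
        intro j
        induction j with
        | zero => simp
        | succ j ih =>
          rw [succ_nsmul, ← add_assoc, pow_succ, ← mul_assoc, ← ih]
          rw [hz]
          simp only [fourier_apply, smul_add, AddCircle.toCircle_add, Circle.coe_mul]
      simp only [this, ← Finset.mul_sum]
      rw [norm_mul]
      have h5 : ‖(fourier n x : ℂ)‖ = 1 := by rw [fourier_apply]; exact Circle.norm_coe _
      rw [h5, one_mul]
      have := geom_bound z hz1 hz2 N
      have : 0 ≤ ε * N := by positivity
      linarith
  have hcl : f ∈ (Submodule.span ℂ (Set.range (@fourier 1))).topologicalClosure := by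
    rw [span_fourier_closure_eq_top]; trivial
  intro ε hε
  have hcl' := hcl
  rw [← SetLike.mem_coe, Submodule.topologicalClosure_coe, Metric.mem_closure_iff] at hcl'
  obtain ⟨g, hg, hd⟩ := hcl' (ε/4) (by linarith)
  obtain ⟨C, hC, h1⟩ := hS hg (ε/4) (by linarith)
  refine ⟨C, hC, fun N x => ?_⟩
  have hp : ∀ y, ‖f y - g y‖ ≤ ε/4 := fun y => by
    rw [← dist_eq_norm]
    exact (ContinuousMap.dist_apply_le_dist y).trans hd.le
  have e1 : ‖∑ j ∈ Finset.range N, (f (x + j • (b : UnitAddCircle)) - g (x + j • (b : UnitAddCircle)))‖ ≤ N * (ε/4) := by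
    calc _ ≤ ∑ j ∈ Finset.range N, (ε/4) := norm_sum_le_of_le _ (fun j _ => hp _)
      _ = _ := by simp
  have hfi : MeasureTheory.Integrable f (AddCircle.haarAddCircle (T := 1)) :=
    f.continuous.integrable_of_hasCompactSupport (HasCompactSupport.of_compactSpace _)
  have hgi : MeasureTheory.Integrable g (AddCircle.haarAddCircle (T := 1)) :=
    g.continuous.integrable_of_hasCompactSupport (HasCompactSupport.of_compactSpace _)
  have e2 : ‖∫ y, f y ∂(AddCircle.haarAddCircle (T := 1)) - ∫ y, g y ∂AddCircle.haarAddCircle‖ ≤ ε/4 := by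
    rw [← MeasureTheory.integral_sub hfi hgi]
    have := MeasureTheory.norm_integral_le_of_norm_le_const (μ := AddCircle.haarAddCircle (T := 1)) (f := fun y => f y - g y) (C := ε/4) (Filter.Eventually.of_forall hp)
    simpa using this
  have h1 := h1 N x
  rw [Finset.sum_sub_distrib] at e1
  set A := ∑ j ∈ Finset.range N, f (x + j • (b : UnitAddCircle))
  set B := ∑ j ∈ Finset.range N, g (x + j • (b : UnitAddCircle))
  set I := ∫ y, f y ∂(AddCircle.haarAddCircle (T := 1))
  set J := ∫ y, g y ∂(AddCircle.haarAddCircle (T := 1))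
  calc ‖A - N * I‖ = ‖(A - B) + (B - N * J) - N * (I - J)‖ := by congr 1; ring
    _ ≤ ‖A - B‖ + ‖B - N * J‖ + ‖(N:ℂ) * (I - J)‖ := by
      refine (norm_sub_le _ _).trans ?_
      gcongr
      exact norm_add_le _ _
    _ ≤ N * (ε/4) + (ε/4 * N + C) + N * (ε/4) := by
      gcongr
      rw [norm_mul]
      simp only [RCLike.norm_natCast]
      gcongr
    _ ≤ ε * N + C := by
      have : 0 ≤ ε * N := by positivity
      linarith

lemma weyl (b : ℝ) (hb : Irrational b) (f : ℝ → ℝ) (hf : Continuous f) (hper : Function.Periodic f 1)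
    (ε : ℝ) (hε : 0 < ε) : ∃ C : ℝ, 0 ≤ C ∧ ∀ (N : ℕ) (x : ℝ),
      |∑ j ∈ Finset.range N, f (x + j * b) - N * ∫ y in (0:ℝ)..1, f y| ≤ ε * N + C := by
  have hperc : Function.Periodic (fun x => (f x : ℂ)) 1 := fun x => by simp [hper x]
  let F : C(UnitAddCircle, ℂ) := ⟨hperc.lift, by
    apply continuous_coinduced_dom.mpr
    exact Complex.continuous_ofReal.comp hf⟩
  obtain ⟨C, hC, h⟩ := weyl_circle b hb F ε hε
  refine ⟨C, hC, fun N x => ?_⟩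
  have h := h N (x : UnitAddCircle)
  have hI : ∫ y, F y ∂(AddCircle.haarAddCircle (T := 1)) = ((∫ y in (0:ℝ)..1, f y : ℝ) : ℂ) := by
    rw [AddCircle.integral_haarAddCircle, inv_one, one_smul]
    have := UnitAddCircle.intervalIntegral_preimage 0 (fun y => F y)
    rw [← this, zero_add, ← intervalIntegral.integral_ofReal]
    rfl
  have hs : ∀ j : ℕ, F ((x : UnitAddCircle) + j • (b : UnitAddCircle)) = ((f (x + j * b) : ℝ) : ℂ) := by
    intro j
    have : (x : UnitAddCircle) + j • (b : UnitAddCircle) = ((x + j * b : ℝ) : UnitAddCircle) := by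
      rw [← nsmul_eq_mul]; rfl
    rw [this]; rfl
  simp only [hs] at h
  rw [hI] at h
  rw [← Real.norm_eq_abs, ← Complex.norm_real]
  push_cast
  exact h

open scoped Real

/-- Determinants of the box-restricted operators `E - H`. -/
noncomputable def pd (V : ℝ → ℝ) (b E : ℝ) : ℕ → ℝ → ℝ
  | 0, _ => 1
  | 1, x => E - V x
  | (m+2), x => (E - V (x + (m + 1 : ℝ) * b)) * pd V b E (m+1) x - pd V b E m x

lemma tProd_succ (V : ℝ → ℝ) (b : ℝ) (n : ℕ) (x : ℝ) (z : ℂ) :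
    tProd V b (n+1) x z = tMat V (x + n * b) z * tProd V b n x z := by
  unfold tProd
  rw [List.range_succ]
  simp

lemma tProd_zero (V : ℝ → ℝ) (b : ℝ) (x : ℝ) (z : ℂ) : tProd V b 0 x z = 1 := by
  simp [tProd]

lemma tProd_add (V : ℝ → ℝ) (b : ℝ) (n m : ℕ) (x : ℝ) (z : ℂ) :
    tProd V b (n+m) x z = tProd V b n (x + m * b) z * tProd V b m x z := by
  induction n with
  | zero => simp [tProd_zero]
  | succ n ih =>
    rw [show n + 1 + m = (n + m) + 1 by ring, tProd_succ, ih, tProd_succ, mul_assoc]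
    congr 2
    push_cast; ring

lemma opNorm2_mul (A B : Matrix (Fin 2) (Fin 2) ℂ) : opNorm2 (A * B) ≤ opNorm2 A * opNorm2 B := by
  unfold opNorm2
  rw [map_mul]
  exact norm_mul_le _ _

lemma entry_le (A : Matrix (Fin 2) (Fin 2) ℂ) (i j : Fin 2) : ‖A i j‖ ≤ opNorm2 A := by
  unfold opNorm2
  have h := (Matrix.toEuclideanCLM (𝕜 := ℂ) A).le_opNorm (EuclideanSpace.single j 1)
  rw [EuclideanSpace.norm_single, norm_one, mul_one] at h
  refine le_trans ?_ h
  have h2 := PiLp.norm_apply_le (Matrix.toEuclideanCLM (𝕜 := ℂ) A (EuclideanSpace.single j 1)) i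
  refine le_trans (le_of_eq ?_) h2
  rw [Matrix.ofLp_toEuclideanCLM]
  simp

lemma opNorm2_le : ∃ C : ℝ, 0 < C ∧ ∀ A : Matrix (Fin 2) (Fin 2) ℂ,
    opNorm2 A ≤ C * (‖A 0 0‖ + ‖A 0 1‖ + ‖A 1 0‖ + ‖A 1 1‖) := by
  let s : Fin 2 → Fin 2 → ℝ := fun i j => opNorm2 (Matrix.single i j 1)
  have hs : ∀ i j, 0 ≤ s i j := fun i j => norm_nonneg _
  have h00 := hs 0 0
  have h01 := hs 0 1
  have h10 := hs 1 0
  have h11 := hs 1 1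
  refine ⟨s 0 0 + s 0 1 + s 1 0 + s 1 1 + 1, by linarith, fun A => ?_⟩
  have e : A = A 0 0 • Matrix.single 0 0 1 + A 0 1 • Matrix.single 0 1 1 +
      A 1 0 • Matrix.single 1 0 1 + A 1 1 • Matrix.single 1 1 1 := by
    ext i j
    fin_cases i <;> fin_cases j <;> simp [Matrix.single]
  have : opNorm2 A ≤ ‖A 0 0‖ * s 0 0 + ‖A 0 1‖ * s 0 1 + ‖A 1 0‖ * s 1 0 + ‖A 1 1‖ * s 1 1 := by
    conv_lhs => rw [e]
    unfold opNorm2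
    simp only [map_add, map_smul]
    refine (norm_add_le _ _).trans (add_le_add ((norm_add_le _ _).trans (add_le_add ((norm_add_le _ _).trans (add_le_add ?_ ?_)) ?_)) ?_) <;>
    · rw [norm_smul]; rfl
  have n00 := norm_nonneg (A 0 0)
  have n01 := norm_nonneg (A 0 1)
  have n10 := norm_nonneg (A 1 0)
  have n11 := norm_nonneg (A 1 1)
  refine this.trans ?_
  have : 0 ≤ (s 0 0 + s 0 1 + s 1 0 + s 1 1) := by linarith
  have a1 := mul_le_mul_of_nonneg_left (show s 0 0 ≤ s 0 0 + s 0 1 + s 1 0 + s 1 1 + 1 by linarith) n00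
  have a2 := mul_le_mul_of_nonneg_left (show s 0 1 ≤ s 0 0 + s 0 1 + s 1 0 + s 1 1 + 1 by linarith) n01
  have a3 := mul_le_mul_of_nonneg_left (show s 1 0 ≤ s 0 0 + s 0 1 + s 1 0 + s 1 1 + 1 by linarith) n10
  have a4 := mul_le_mul_of_nonneg_left (show s 1 1 ≤ s 0 0 + s 0 1 + s 1 0 + s 1 1 + 1 by linarith) n11
  linarith

lemma tProd_entries (V : ℝ → ℝ) (b E : ℝ) (m : ℕ) (x : ℝ) :
    tProd V b (m+1) x E 0 0 = (pd V b E (m+1) x : ℝ) ∧ tProd V b (m+1) x E 1 0 = (pd V b E m x : ℝ) := by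
  induction m with
  | zero =>
    simp [tProd_succ, tProd_zero, tMat, pd]
  | succ m ih =>
    rw [tProd_succ]
    simp only [Matrix.mul_apply, Fin.sum_univ_two, ih.1, ih.2]
    simp [tMat, pd]
    ring

lemma tProd_entries2 (V : ℝ → ℝ) (b E : ℝ) (m : ℕ) (x : ℝ) :
    tProd V b (m+2) x E 0 1 = -(pd V b E (m+1) (x+b) : ℝ) ∧
    tProd V b (m+2) x E 1 1 = -(pd V b E m (x+b) : ℝ) := by
  induction m with
  | zero =>
    simp [tProd_succ, tProd_zero, tMat, pd]
  | succ m ih =>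
    rw [tProd_succ]
    simp only [Matrix.mul_apply, Fin.sum_univ_two, ih.1, ih.2]
    simp [tMat, pd]
    ring_nf

lemma pd_le (V : ℝ → ℝ) (b E : ℝ) (m : ℕ) (x : ℝ) : |pd V b E m x| ≤ opNorm2 (tProd V b m x E) := by
  cases m with
  | zero =>
    have := entry_le (tProd V b 0 x E) 0 0
    simpa [tProd_zero, pd] using this
  | succ m =>
    have := entry_le (tProd V b (m+1) x E) 0 0
    rw [(tProd_entries V b E m x).1, Complex.norm_real] at this
    exact this

lemma det_tProd (V : ℝ → ℝ) (b : ℝ) (m : ℕ) (x : ℝ) (z : ℂ) : (tProd V b m x z).det = 1 := by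
  induction m with
  | zero => simp [tProd_zero]
  | succ m ih => rw [tProd_succ, Matrix.det_mul, ih]; simp [tMat]

lemma opNorm2_pos (V : ℝ → ℝ) (b : ℝ) (m : ℕ) (x : ℝ) (z : ℂ) : 0 < opNorm2 (tProd V b m x z) := by
  unfold opNorm2
  rw [norm_pos_iff]
  intro h
  rw [map_eq_zero_iff _ (EquivLike.injective _)] at h
  have := det_tProd V b m x z
  rw [h] at this
  simp at this

lemma tProd_cont (V : ℝ → ℝ) (hV : Continuous V) (b : ℝ) (m : ℕ) (z : ℂ) :
    Continuous (fun x => tProd V b m x z) := by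
  induction m with
  | zero => simp only [tProd_zero]; exact continuous_const
  | succ m ih =>
    simp only [tProd_succ]
    refine Continuous.matrix_mul ?_ ih
    refine continuous_matrix fun i j => ?_
    fin_cases i <;> fin_cases j <;> simp [tMat] <;> fun_prop

lemma opNorm2_cont : Continuous opNorm2 := by
  unfold opNorm2
  refine continuous_norm.comp ?_
  exact LinearMap.continuous_of_finiteDimensional
    ((Matrix.toEuclideanCLM (𝕜 := ℂ) (n := Fin 2)).toAlgEquiv.toLinearMap)

lemma logNorm_cont (V : ℝ → ℝ) (hV : Continuous V) (b : ℝ) (m : ℕ) (z : ℂ) :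
    Continuous (fun x => Real.log (opNorm2 (tProd V b m x z))) :=
  Continuous.log (opNorm2_cont.comp (tProd_cont V hV b m z)) (fun x => (opNorm2_pos V b m x z).ne')

lemma tProd_per (V : ℝ → ℝ) (hV : Function.Periodic V 1) (b : ℝ) (m : ℕ) (x : ℝ) (z : ℂ) :
    tProd V b m (x+1) z = tProd V b m x z := by
  unfold tProd tMat
  congr 1
  apply List.map_congr_left
  intro j _
  rw [show x + 1 + j * b = (x + j * b) + 1 by ring, hV]

/-- uniform upper bound -/
lemma furman (V : ℝ → ℝ) (hV : Continuous V) (hp : Function.Periodic V 1) (b : ℝ) (hb : Irrational b)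
    (E : ℝ) (ε : ℝ) (hε : 0 < ε) : ∃ C : ℝ, 0 < C ∧ ∀ (l : ℕ) (x : ℝ),
      |pd V b E l x| ≤ C * Real.exp (l * (lyap V b E + ε)) := by
  obtain ⟨m, hm⟩ := exists_lt_of_ciInf_lt (show lyap V b E < lyap V b E + ε/2 by linarith)
  have hm0 : (0:ℝ) < (m:ℕ) := by exact_mod_cast m.pos
  set L := lyap V b E with hL
  set φ : ℝ → ℝ := fun x => Real.log (opNorm2 (tProd V b m x E)) with hφ
  set I := ∫ x in (0:ℝ)..1, φ x with hI
  have hIm : I ≤ m * (L + ε/2) := by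
    have : ((m:ℕ):ℝ)⁻¹ * I < L + ε/2 := hm
    rw [inv_mul_lt_iff₀ hm0] at this
    exact this.le
  have hbm : Irrational ((m:ℕ) * b) := hb.natCast_mul m.ne_zero
  obtain ⟨C, hC, hW⟩ := weyl ((m:ℕ) * b) hbm φ (logNorm_cont V hV b m E)
    (fun x => by simp only [hφ]; rw [tProd_per V hp]) (ε/2) (by linarith)
  -- bound for short products
  have hshort : ∃ D : ℝ, 0 < D ∧ ∀ s < (m:ℕ), ∀ x, opNorm2 (tProd V b s x E) ≤ D := by
    have : ∀ s : ℕ, ∃ D : ℝ, 0 < D ∧ ∀ x, opNorm2 (tProd V b s x E) ≤ D := by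
      intro s
      have hc : Continuous (fun x => opNorm2 (tProd V b s x E)) := opNorm2_cont.comp (tProd_cont V hV b s E)
      obtain ⟨D, hD⟩ := (isCompact_Icc (a := (0:ℝ)) (b := 1)).bddAbove_image hc.continuousOn
      refine ⟨|D| + 1, by positivity, fun x => ?_⟩
      have hper : Function.Periodic (fun x => opNorm2 (tProd V b s x E)) 1 := fun x => by
        simp only; rw [tProd_per V hp]
      obtain ⟨y, hy, hxy⟩ := hper.exists_mem_Ico₀ one_pos x
      have := hD ⟨y, ⟨hy.1, hy.2.le⟩, rfl⟩
      have h2 := le_abs_self D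
      simp only at hxy this
      linarith
    choose D hD hD2 using this
    refine ⟨∑ s ∈ Finset.range m, D s, Finset.sum_pos (fun s _ => hD s) ⟨0, by simp⟩, fun s hs x => ?_⟩
    exact (hD2 s x).trans (Finset.single_le_sum (f := D) (fun i _ => (hD i).le) (Finset.mem_range.2 hs))
  obtain ⟨D, hD, hDs⟩ := hshort
  have hlong : ∀ (q : ℕ) (x : ℝ), opNorm2 (tProd V b (q * m) x E) ≤
      opNorm2 1 * Real.exp (∑ j ∈ Finset.range q, φ (x + j * ((m:ℕ) * b))) := by
    intro q x
    induction q with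
    | zero => simp [tProd_zero]
    | succ q ih =>
      rw [show (q + 1) * (m:ℕ) = m + q * m by ring, tProd_add, Finset.sum_range_succ, Real.exp_add]
      refine (opNorm2_mul _ _).trans ?_
      have e : Real.exp (φ (x + q * ((m:ℕ) * b))) = opNorm2 (tProd V b m (x + ((q * m : ℕ):ℝ) * b) E) := by
        simp only [hφ]
        rw [Real.exp_log (opNorm2_pos _ _ _ _ _)]
        congr 2; push_cast; ring
      rw [e, mul_comm, ← mul_assoc]
      gcongr
      exact (opNorm2_pos _ _ _ _ _).le
  have h1pos : 0 < opNorm2 1 := by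
    have := opNorm2_pos V b 0 0 E
    rwa [tProd_zero] at this
  set K := D * opNorm2 1 * Real.exp (C + m * |L + ε|) with hK
  refine ⟨K, by positivity, fun l x => ?_⟩
  obtain ⟨q, s, hs, hl⟩ : ∃ q s : ℕ, s < m ∧ l = s + q * m :=
    ⟨l / m, l % m, Nat.mod_lt _ m.pos, by rw [mul_comm]; exact (Nat.mod_add_div l m).symm⟩
  refine (pd_le V b E l x).trans ?_
  rw [hl, tProd_add]
  refine (opNorm2_mul _ _).trans ?_
  have a1 := hDs s hs (x + ((q * m : ℕ):ℝ) * b)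
  have a2 := hlong q x
  have a3 : ∑ j ∈ Finset.range q, φ (x + j * ((m:ℕ) * b)) ≤ C + q * m * (L + ε) := by
    have := (abs_le.1 (hW q x)).2
    have h4 : q * I ≤ q * (m * (L + ε/2)) := by gcongr
    have hm1 : (1:ℝ) ≤ (m:ℕ) := by exact_mod_cast m.pos
    have h5 : ε/2 * q ≤ ε/2 * q * m := le_mul_of_one_le_right (by positivity) hm1
    have h6 : (q:ℝ) * m * (L + ε) = q * (m * (L + ε/2)) + ε/2 * q * m := by ring
    rw [h6]
    linarith
  have a4 : -(m * |L+ε|) ≤ s * (L + ε) := by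
    have h5 : |(s:ℝ) * (L+ε)| ≤ m * |L+ε| := by
      rw [abs_mul, Nat.abs_cast]
      gcongr
    linarith [(abs_le.1 h5).1]
  have a5 : ∑ j ∈ Finset.range q, φ (x + j * ((m:ℕ) * b)) ≤
      (C + (m:ℕ) * |L+ε|) + ((s + q * m : ℕ):ℝ) * (L + ε) := by
    push_cast
    linarith
  have a6 := Real.exp_le_exp.2 a5
  rw [Real.exp_add] at a6
  have a7 := a2.trans (mul_le_mul_of_nonneg_left a6 h1pos.le)
  have a8 := mul_le_mul a1 a7 (opNorm2_pos _ _ _ _ _).le hD.le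
  refine a8.trans (le_of_eq ?_)
  rw [hK, mul_assoc, mul_assoc]

lemma lower (V : ℝ → ℝ) (hV : Continuous V) (b : ℝ) (E : ℝ) (hL : 0 < lyap V b E) :
    ∃ c : ℝ, 0 < c ∧ ∀ K : ℕ, ∃ k : ℕ, k ≤ K + 2 ∧ K ≤ k ∧ ∃ x, c * Real.exp (k * lyap V b E) ≤ |pd V b E k x| := by
  obtain ⟨C, hC, hCA⟩ := opNorm2_le
  set L := lyap V b E with hLdef
  refine ⟨(4 * C)⁻¹ * Real.exp (-1), by positivity, fun K => ?_⟩
  have hbdd : BddBelow (Set.range (fun n : ℕ+ => ((n : ℝ))⁻¹ * ∫ x in (0:ℝ)..(1:ℝ), Real.log (opNorm2 (tProd V b n x E)))) := by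
    by_contra h
    have : lyap V b E = 0 := Real.sInf_of_not_bddBelow h
    linarith
  have h1 : L ≤ ((K + 2 : ℕ):ℝ)⁻¹ * ∫ x in (0:ℝ)..(1:ℝ), Real.log (opNorm2 (tProd V b (K+2) x E)) :=
    ciInf_le hbdd ⟨K+2, by omega⟩
  rw [le_inv_mul_iff₀ (by positivity)] at h1
  have hx : ∃ x, ((K+2:ℕ):ℝ) * L - 1 ≤ Real.log (opNorm2 (tProd V b (K+2) x E)) := by
    by_contra! h
    have := intervalIntegral.integral_mono_on (μ := MeasureTheory.volume) (zero_le_one' ℝ) ((logNorm_cont V hV b (K+2) E).intervalIntegrable 0 1)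
      (continuous_const (y := ((K+2:ℕ):ℝ) * L - 1) |>.intervalIntegrable 0 1) (fun x _ => (h x).le)
    simp at this
    push_cast at h1
    linarith
  obtain ⟨x, hx⟩ := hx
  rw [Real.le_log_iff_exp_le (opNorm2_pos _ _ _ _ _)] at hx
  have h2 := hx.trans (hCA _)
  rw [(tProd_entries V b E (K+1) x).1, (tProd_entries V b E (K+1) x).2, (tProd_entries2 V b E K x).1, (tProd_entries2 V b E K x).2,
    norm_neg, norm_neg] at h2
  simp only [Complex.norm_real, Real.norm_eq_abs] at h2
  have key : ∀ k : ℕ, k ≤ K + 2 → (4 * C)⁻¹ * Real.exp (-1) * Real.exp (k * L) ≤ (4*C)⁻¹ * Real.exp (((K+2:ℕ):ℝ) * L - 1) := by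
    intro k hk
    rw [mul_assoc, ← Real.exp_add]
    have : (k:ℝ) * L ≤ ((K+2:ℕ):ℝ) * L := by gcongr
    gcongr
    linarith
  set X := Real.exp (((K+2:ℕ):ℝ) * L - 1) with hX
  have hX4 : X = C * (4 * ((4*C)⁻¹ * X)) := by
    field_simp
  by_contra! hcon
  have b1 := (hcon (K+2) le_rfl (by omega) x).trans_le (key (K+2) le_rfl)
  have b2 := (hcon (K+1) (by omega) (by omega) x).trans_le (key (K+1) (by omega))
  have b3 := (hcon (K+1) (by omega) (by omega) (x+b)).trans_le (key (K+1) (by omega))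
  have b4 := (hcon K (by omega) le_rfl (x+b)).trans_le (key K (by omega))
  have hlt : |pd V b E (K + 1 + 1) x| + |pd V b E (K + 1) (x + b)| + |pd V b E (K + 1) x| + |pd V b E K (x + b)|
      < 4 * ((4*C)⁻¹ * X) := by
    rw [show K + 1 + 1 = K + 2 from rfl]
    linarith
  have h7 := mul_lt_mul_of_pos_left hlt hC
  linarith

/-- Green's function identity. -/
lemma green (V : ℝ → ℝ) (b E θ : ℝ) (u : ℤ → ℝ)
    (heq : ∀ n : ℤ, u (n + 1) + u (n - 1) + V ((n : ℝ) * b + θ) * u n = E * u n) (a : ℤ) (l m : ℕ) :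
    pd V b E (l + 1 + m) (θ + a * b) * u (a + l) =
      pd V b E m (θ + (a + l + 1 : ℤ) * b) * u (a - 1) + pd V b E l (θ + a * b) * u (a + l + 1 + m) := by
  have hrec : ∀ n : ℤ, u (n + 1) = (E - V (n * b + θ)) * u n - u (n - 1) := fun n => by
    linarith [heq n]
  have base : ∀ l : ℕ, pd V b E (l + 1) (θ + a * b) * u (a + l) =
      u (a - 1) + pd V b E l (θ + a * b) * u (a + l + 1) := by
    intro l
    induction l with
    | zero =>
      simp [pd]
      rw [hrec a]
      rw [add_comm θ]; ring
    | succ l ih =>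
      have h := hrec (a + l + 1)
      rw [show a + l + 1 - 1 = a + l by ring] at h
      rw [show (a + ((l + 1 : ℕ) : ℤ)) = a + l + 1 by push_cast; ring, h]
      rw [pd, show θ + a * b + (l + 1 : ℝ) * b = ((a + l + 1 : ℤ) : ℝ) * b + θ by push_cast; ring]
      linarith
  induction m using Nat.twoStepInduction with
  | zero => simpa [pd] using base l
  | one =>
    have h := hrec (a + l + 1)
    rw [show a + l + 1 - 1 = a + l by ring] at h
    have hb := base l
    simp only [Nat.cast_one]
    rw [h, show l + 1 + 1 = l + 2 by ring, pd, pd, show θ + a * b + (l + 1 : ℝ) * b = ((a + l + 1 : ℤ) : ℝ) * b + θ by push_cast; ring,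
      add_comm θ (((a + l + 1 : ℤ):ℝ) * b)]
    linear_combination (E - V (((a + l + 1 : ℤ) : ℝ) * b + θ)) * hb
  | more m ih1 ih2 =>
    have h := hrec (a + l + 1 + m + 1)
    rw [show a + l + 1 + m + 1 - 1 = a + l + 1 + m by ring] at h
    rw [show l + 1 + (m + 2) = (l + 1 + m) + 2 by ring, pd, pd]
    rw [show a + (l:ℤ) + 1 + ((m + 2 : ℕ) : ℤ) = a + l + 1 + m + 1 + 1 by push_cast; ring, h]
    rw [show l + 1 + (m + 1) = l + 1 + m + 1 by ring, show a + (l:ℤ) + 1 + ((m + 1 : ℕ) : ℤ) = a + l + 1 + m + 1 by push_cast; ring] at ih2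
    rw [show θ + a * b + (((l + 1 + m : ℕ):ℝ) + 1) * b = ((a + l + 1 + m + 1 : ℤ) : ℝ) * b + θ by push_cast; ring,
      show θ + ((a + l + 1 : ℤ):ℝ) * b + ((m:ℝ) + 1) * b = ((a + l + 1 + m + 1 : ℤ) : ℝ) * b + θ by push_cast; ring]
    linear_combination (E - V (((a + l + 1 + m + 1 : ℤ) : ℝ) * b + θ)) * ih2 - ih1

open scoped Real

lemma pd_left (V : ℝ → ℝ) (b E : ℝ) (m : ℕ) (x : ℝ) :
    pd V b E (m+2) x = (E - V x) * pd V b E (m+1) (x+b) - pd V b E m (x+2*b) := by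
  induction m using Nat.twoStepInduction generalizing x with
  | zero => simp [pd]; ring
  | one =>
    simp only [pd]
    norm_num
    rw [show x + b + b = x + 2 * b by ring]; ring
  | more m ih1 ih2 =>
    have e1 : pd V b E (m + 2 + 2) x = (E - V (x + (((m + 2 : ℕ):ℝ) + 1) * b)) * pd V b E (m + 1 + 2) x
      - pd V b E (m + 2) x := rfl
    have e2 : pd V b E (m + 2 + 1) (x + b) = (E - V (x + b + (((m + 1 : ℕ):ℝ) + 1) * b)) * pd V b E (m + 1 + 1) (x + b)
      - pd V b E (m + 1) (x + b) := rfl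
    have e3 : pd V b E (m + 2) (x + 2 * b) = (E - V (x + 2 * b + ((m:ℝ) + 1) * b)) * pd V b E (m + 1) (x + 2 * b)
      - pd V b E m (x + 2 * b) := rfl
    rw [e1, e2, e3, ih2 x, ih1 x]
    rw [show x + b + (((m + 1 : ℕ):ℝ) + 1) * b = x + (((m + 2 : ℕ):ℝ) + 1) * b by push_cast; ring,
      show x + 2 * b + ((m:ℝ) + 1) * b = x + (((m + 2 : ℕ):ℝ) + 1) * b by push_cast; ring]
    ring

lemma pd_reflect (V : ℝ → ℝ) (hV : ∀ x, V (-x) = V x) (b E : ℝ) (m : ℕ) (x : ℝ) :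
    pd V b E m (-x - ((m:ℝ) - 1) * b) = pd V b E m x := by
  induction m using Nat.twoStepInduction generalizing x with
  | zero => simp [pd]
  | one => simp [pd, hV]
  | more m ih1 ih2 =>
    rw [pd_left V b E m x, pd, ← ih2, ← ih1, ← hV x]
    congr 3
    · congr 2; push_cast; ring
    · push_cast; ring
    · push_cast; ring

noncomputable def den (α x : ℝ) : ℝ := 1 - α * Real.cos (2 * π * x)

lemma den_pos {α : ℝ} (hα : α ∈ Set.Ioo (-1 : ℝ) 1) (x : ℝ) : 0 < den α x := by
  unfold den
  have h1 : |α * Real.cos (2 * π * x)| < 1 := by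
    rw [abs_mul]
    have h2 : |α| < 1 := abs_lt.2 ⟨hα.1, hα.2⟩
    have := Real.abs_cos_le_one (2 * π * x)
    calc |α| * |Real.cos (2 * π * x)| ≤ |α| * 1 := by gcongr
      _ < 1 := by linarith
  linarith [(abs_lt.1 h1).2]

lemma potV_even (α lam x : ℝ) : potV α lam (-x) = potV α lam x := by
  unfold potV
  rw [show 2 * π * (-x) = -(2 * π * x) by ring, Real.cos_neg]

lemma cos_per (x : ℝ) : Real.cos (2 * π * (x + 1)) = Real.cos (2 * π * x) := by
  rw [show 2 * π * (x + 1) = 2 * π * x + 2 * π by ring, Real.cos_add_two_pi]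

lemma potV_per (α lam : ℝ) : Function.Periodic (potV α lam) 1 := fun x => by
  unfold potV; rw [cos_per]

lemma den_per (α : ℝ) : Function.Periodic (den α) 1 := fun x => by
  unfold den; rw [cos_per]

lemma den_cont (α : ℝ) : Continuous (den α) := by
  unfold den; fun_prop

lemma potV_cont {α : ℝ} (hα : α ∈ Set.Ioo (-1 : ℝ) 1) (lam : ℝ) : Continuous (potV α lam) := by
  unfold potV
  refine Continuous.div (by fun_prop) (by fun_prop) (fun x => (den_pos hα x).ne')

/-- trigonometric polynomials of degree at most `m` -/
def TP (m : ℕ) (f : ℝ → ℝ) : Prop :=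
  ∃ A ∈ Polynomial.degreeLT ℝ (m+1), ∃ B ∈ Polynomial.degreeLT ℝ m, ∀ x,
    f x = A.eval (Real.cos (2 * π * x)) + Real.sin (2 * π * x) * B.eval (Real.cos (2 * π * x))

open Polynomial in
lemma degreeLT_mul (p q : ℝ[X]) (m n : ℕ) (hp : p.natDegree ≤ n) (hq : q ∈ degreeLT ℝ m) :
    p * q ∈ degreeLT ℝ (m + n) := by
  rw [mem_degreeLT] at *
  by_cases h0 : q = 0
  · subst h0; simp
  by_cases h1 : p = 0
  · subst h1; simp
  rw [degree_mul, degree_eq_natDegree h0, degree_eq_natDegree h1] at *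
  norm_cast at *
  omega

lemma TP.mono {m n : ℕ} (h : m ≤ n) {f : ℝ → ℝ} (hf : TP m f) : TP n f := by
  obtain ⟨A, hA, B, hB, hf⟩ := hf
  exact ⟨A, Polynomial.degreeLT_mono (by omega) hA, B, Polynomial.degreeLT_mono h hB, hf⟩

lemma TP.sub {m : ℕ} {f g : ℝ → ℝ} (hf : TP m f) (hg : TP m g) : TP m (fun x => f x - g x) := by
  obtain ⟨A, hA, B, hB, hf⟩ := hf
  obtain ⟨A', hA', B', hB', hg⟩ := hg
  refine ⟨A - A', Submodule.sub_mem _ hA hA', B - B', Submodule.sub_mem _ hB hB', fun x => ?_⟩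
  simp only [hf, hg, Polynomial.eval_sub]; ring

open Polynomial in
lemma TP.mul_lin {m : ℕ} {f : ℝ → ℝ} (hf : TP m f) (β γ t : ℝ) :
    TP (m+1) (fun x => (β + γ * Real.cos (2 * π * (x + t))) * f x) := by
  obtain ⟨A, hA, B, hB, hf⟩ := hf
  set p : ℝ[X] := C β + C (γ * Real.cos (2 * π * t)) * X with hp
  have hpd : p.natDegree ≤ 1 := by rw [hp]; compute_degree
  set s : ℝ := γ * Real.sin (2 * π * t) with hs
  have hqd : (C s * (1 - X ^ 2) : ℝ[X]).natDegree ≤ 2 := by compute_degree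
  have hcd : (C s : ℝ[X]).natDegree ≤ 0 := by compute_degree
  refine ⟨p * A - (C s * (1 - X ^ 2)) * B,
    Submodule.sub_mem _ (degreeLT_mul p A (m+1) 1 hpd hA) (degreeLT_mul _ B m 2 hqd hB),
    p * B - C s * A, Submodule.sub_mem _ (degreeLT_mul p B m 1 hpd hB) (degreeLT_mul _ A (m+1) 0 hcd hA),
    fun x => ?_⟩
  have h1 := Real.sin_sq_add_cos_sq (2 * π * x)
  have h2 : (1:ℝ) - Real.cos (2 * π * x) ^ 2 = Real.sin (2 * π * x) ^ 2 := by linarith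
  simp only [hf, hp, eval_sub, eval_mul, eval_add, eval_C, eval_X, eval_one, eval_pow, h2]
  rw [show 2 * π * (x + t) = 2 * π * x + 2 * π * t by ring, Real.cos_add, hs]
  ring

noncomputable def Rd (α lam b E : ℝ) (m : ℕ) (x : ℝ) : ℝ :=
  pd (potV α lam) b E m x * ∏ j ∈ Finset.range m, den α (x + j * b)

lemma potV_den {α : ℝ} (hα : α ∈ Set.Ioo (-1 : ℝ) 1) (lam x : ℝ) :
    potV α lam x * den α x = 2 * lam * Real.cos (2 * π * x) :=
  div_mul_cancel₀ _ (den_pos hα x).ne'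

lemma Rd_TP {α : ℝ} (hα : α ∈ Set.Ioo (-1 : ℝ) 1) (lam b E s : ℝ) (m : ℕ) :
    TP m (fun x => Rd α lam b E m (x + s)) := by
  have hone : TP 0 (fun _ => (1:ℝ)) := by
    refine ⟨1, ?_, 0, Submodule.zero_mem _, fun x => by simp⟩
    rw [Polynomial.mem_degreeLT]; simp
  induction m using Nat.twoStepInduction with
  | zero => simpa [Rd, pd] using hone
  | one =>
    have := hone.mul_lin E (-(E * α) - 2 * lam) s
    convert this using 2 with x
    simp only [Rd, pd, Finset.prod_range_one, Nat.cast_zero, zero_mul, add_zero]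
    have := potV_den hα lam (x + s)
    rw [sub_mul, this]
    unfold den; ring
  | more m ih1 ih2 =>
    have h1 := ih2.mul_lin E (-(E * α) - 2 * lam) (s + (m+1) * b)
    have h2 := (ih1.mul_lin 1 (-α) (s + m * b)).mul_lin 1 (-α) (s + (m+1) * b)
    convert h1.sub h2 using 2 with x
    have h3 := potV_den hα lam (x + s + (m + 1) * b)
    simp only [Rd, pd, Finset.prod_range_succ]
    rw [← add_assoc, ← add_assoc]
    have h4 : 1 + -α * Real.cos (2 * π * (x + s + m * b)) = den α (x + s + m * b) := by unfold den; ring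
    have h5 : 1 + -α * Real.cos (2 * π * (x + s + (m + 1) * b)) = den α (x + s + (m+1) * b) := by unfold den; ring
    have h6 : E + (-(E * α) - 2 * lam) * Real.cos (2 * π * (x + s + (m + 1) * b)) =
        (E - potV α lam (x + s + (m+1) * b)) * den α (x + s + (m+1) * b) := by
      rw [sub_mul (E : ℝ), h3]; unfold den; ring
    rw [h4, h5, h6]
    push_cast
    ring

lemma Rd_poly {α : ℝ} (hα : α ∈ Set.Ioo (-1 : ℝ) 1) (lam b E : ℝ) (m : ℕ) :
    ∃ Q : Polynomial ℝ, Q.degree < ((m + 1 : ℕ) : WithBot ℕ) ∧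
      ∀ x, Rd α lam b E m x = Q.eval (Real.cos (2 * π * (x + ((m:ℝ) - 1) / 2 * b))) := by
  obtain ⟨A, hA, B, hB, h⟩ := Rd_TP hα lam b E (-(((m:ℝ) - 1) / 2 * b)) m
  refine ⟨A, Polynomial.mem_degreeLT.1 hA, fun x => ?_⟩
  have hrefl : ∀ x, Rd α lam b E m (-x - ((m:ℝ) - 1) * b) = Rd α lam b E m x := by
    intro x
    unfold Rd
    rw [pd_reflect _ (potV_even α lam)]
    congr 1
    rw [← Finset.prod_range_reflect]
    refine Finset.prod_congr rfl fun j hj => ?_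
    have hj' := Finset.mem_range.1 hj
    have : ((m - 1 - j : ℕ) : ℝ) = (m:ℝ) - 1 - j := by
      rw [Nat.cast_sub (by omega), Nat.cast_sub (by omega)]; simp
    rw [this]
    unfold den
    rw [show 2 * π * (-x - ((m:ℝ) - 1) * b + ((m:ℝ) - 1 - j) * b) = -(2 * π * (x + j * b)) by ring, Real.cos_neg]
  have h1 := h (x + ((m:ℝ) - 1) / 2 * b)
  have h2 := h (-(x + ((m:ℝ) - 1) / 2 * b))
  rw [show 2 * π * -(x + ((m:ℝ) - 1) / 2 * b) = -(2 * π * (x + ((m:ℝ) - 1) / 2 * b)) by ring, Real.cos_neg, Real.sin_neg] at h2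
  simp only at h1 h2
  rw [show x + ((m:ℝ) - 1) / 2 * b + -(((m:ℝ) - 1) / 2 * b) = x by ring] at h1
  rw [show -(x + ((m:ℝ) - 1) / 2 * b) + -(((m:ℝ) - 1) / 2 * b) = -x - ((m:ℝ) - 1) * b by ring, hrefl] at h2
  linarith

open scoped Real

/-- A separated finite set of integers in an interval is small. -/
lemma sep_count (G : ℝ) (hG : 0 < G) (N : ℕ) (a : ℤ) : ∀ (S : Finset ℤ),
    (∀ j ∈ S, a ≤ j ∧ j < a + N) → (∀ j ∈ S, ∀ j' ∈ S, j < j' → G < ((j' - j : ℤ) : ℝ)) →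
    (S.card : ℝ) ≤ 1 + N / G := by
  induction N using Nat.strong_induction_on generalizing a with
  | _ N ih =>
  intro S hS hsep
  rcases S.eq_empty_or_nonempty with h | h
  · subst h; simp; positivity
  · set m := S.min' h with hm
    have hmS : m ∈ S := S.min'_mem h
    rcases (S.erase m).eq_empty_or_nonempty with h2 | h2
    · have : S.card ≤ 1 := by
        have := Finset.card_erase_of_mem hmS
        rw [h2] at this; simp at this; omega
      have h1 : (S.card:ℝ) ≤ 1 := by exact_mod_cast this
      have : 0 ≤ (N:ℝ)/G := by positivity
      linarith
    · set m' := (S.erase m).min' h2 with hm'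
      have hm'S : m' ∈ S.erase m := (S.erase m).min'_mem h2
      have hm'S2 := Finset.mem_of_mem_erase hm'S
      have hlt : m < m' := lt_of_le_of_ne (S.min'_le _ hm'S2) (Finset.ne_of_mem_erase hm'S).symm
      have hg := hsep m hmS m' hm'S2 hlt
      have ha := hS m hmS
      have ha' := hS m' hm'S2
      obtain ⟨d, hd⟩ := Int.eq_ofNat_of_zero_le (show 0 ≤ a + N - m' by omega)
      have := ih d (by omega) m' (S.erase m) (by
        intro j hj
        have h3 := (S.erase m).min'_le j hj
        have h4 := hS j (Finset.mem_of_mem_erase hj)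
        constructor
        · exact h3
        · omega) (by
        intro j hj j' hj'
        exact hsep j (Finset.mem_of_mem_erase hj) j' (Finset.mem_of_mem_erase hj'))
      have hc : (S.card : ℝ) = (S.erase m).card + 1 := by
        have := Finset.card_erase_add_one hmS
        exact_mod_cast this.symm
      have hdd : (d:ℝ) ≤ N - G := by
        have h5 : ((d:ℤ):ℝ) = ((a + N - m' : ℤ):ℝ) := by rw [← hd]
        have h6 : ((m' - m : ℤ):ℝ) ≤ ((m' - a : ℤ):ℝ) := by exact_mod_cast (by omega)
        push_cast at h5 h6 hg
        linarith
      rw [hc]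
      have h7 : (d:ℝ)/G ≤ (N - G)/G := by gcongr
      rw [sub_div, div_self hG.ne'] at h7
      linarith

lemma dio_pi {b r : ℝ} (h : DiophantineExp b r) : 1 < r ∧ ∃ c > (0:ℝ), ∀ n : ℤ, n ≠ 0 →
    c / |(n:ℝ)| ^ r < |Real.sin (π * (n * b))| := by
  obtain ⟨hr, c, hc, hh⟩ := h
  refine ⟨hr, c/2, by positivity, fun n hn => ?_⟩
  have h1 := hh n hn
  have h2 : Real.sin (2 * π * n * b) = 2 * Real.sin (π * (n*b)) * Real.cos (π * (n * b)) := by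
    rw [← Real.sin_two_mul]; ring_nf
  rw [h2, abs_mul, abs_mul] at h1
  have h3 := Real.abs_cos_le_one (π * (n*b))
  have h4 := abs_nonneg (Real.sin (π * (n * b)))
  have h5 : |(2:ℝ)| = 2 := by norm_num
  rw [h5] at h1
  have : c / 2 / |(n:ℝ)|^r = (c / |(n:ℝ)|^r)/2 := by ring
  rw [this]
  nlinarith

lemma abs_sin_sub_le (A B : ℝ) : |Real.sin (A - B)| ≤ |Real.sin A| + |Real.sin B| := by
  rw [Real.sin_sub]
  refine (abs_sub _ _).trans ?_
  rw [abs_mul, abs_mul]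
  have := Real.abs_cos_le_one A
  have := Real.abs_cos_le_one B
  have := abs_nonneg (Real.sin A)
  have := abs_nonneg (Real.sin B)
  nlinarith

lemma count_small {b r : ℝ} (h : DiophantineExp b r) : ∃ C, 0 < C ∧ ∀ (N : ℕ) (a : ℤ) (y : ℝ)
    (s : ℝ) (S : Finset ℤ), (∀ j ∈ S, a ≤ j ∧ j < a + N) →
    (∀ j ∈ S, |Real.sin (π * (y + j * b))| < Real.exp (-s)) →
    (S.card : ℝ) ≤ 1 + C * N * Real.exp (-s/r) := by
  obtain ⟨hr, c, hc, hh⟩ := dio_pi h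
  have hr0 : 0 < r := by linarith
  refine ⟨(c/2) ^ (-(1/r)), by positivity, fun N a y s S hS hsm => ?_⟩
  have := sep_count ((c/2)^(1/r) * Real.exp (s/r)) (by positivity) N a S hS (by
    intro j hj j' hj' hlt
    have h1 := hh (j' - j) (by omega)
    have h2 := abs_sin_sub_le (π * (y + j' * b)) (π * (y + j * b))
    have h3 := hsm j hj
    have h4 := hsm j' hj'
    have h5 : π * (y + j' * b) - π * (y + j * b) = π * (((j' - j : ℤ):ℝ) * b) := by
      push_cast; ring
    rw [h5] at h2
    have hpos : (0:ℝ) < ((j' - j : ℤ):ℝ) := by exact_mod_cast (by omega)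
    rw [abs_of_pos hpos] at h1
    set D := ((j' - j : ℤ):ℝ)
    have h6 : c / D ^ r < 2 * Real.exp (-s) := by linarith
    rw [div_lt_iff₀ (by positivity)] at h6
    have h7 : c/2 * Real.exp s < D ^ r := by
      have : Real.exp s * Real.exp (-s) = 1 := by rw [← Real.exp_add]; simp
      have he := Real.exp_pos s
      have h9 := mul_lt_mul_of_pos_left h6 he
      have h10 : Real.exp s * (2 * Real.exp (-s) * D ^ r) = 2 * D ^ r := by
        calc _ = 2 * (Real.exp s * Real.exp (-s)) * D ^ r := by ring
          _ = _ := by rw [this]; ring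
      linarith
    have h8 := Real.rpow_lt_rpow (by positivity) h7 (show 0 < 1/r by positivity)
    rw [← Real.rpow_mul hpos.le, mul_one_div_cancel hr0.ne', Real.rpow_one,
      Real.mul_rpow (by positivity) (Real.exp_pos s).le, ← Real.exp_mul, mul_one_div] at h8
    exact h8)
  refine this.trans (le_of_eq ?_)
  rw [Real.rpow_neg (by positivity), neg_div, Real.exp_neg]
  field_simp

/-- truncated log sine -/
noncomputable def FT (T : ℕ) (x : ℝ) : ℝ := Real.log (max |Real.sin (π * x)| (Real.exp (-T)))

lemma FT_arg_pos (T : ℕ) (x : ℝ) : 0 < max |Real.sin (π * x)| (Real.exp (-T)) :=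
  lt_max_of_lt_right (Real.exp_pos _)

lemma FT_cont (T : ℕ) : Continuous (FT T) := by
  unfold FT
  apply Continuous.log
  · fun_prop
  · intro x; exact (FT_arg_pos T x).ne'

lemma FT_per (T : ℕ) : Function.Periodic (FT T) 1 := by
  intro x
  unfold FT
  rw [mul_add, mul_one, Real.sin_add_pi, abs_neg]

lemma FT_le (T : ℕ) (x : ℝ) : FT T x ≤ 0 := by
  unfold FT
  apply Real.log_nonpos (FT_arg_pos T x).le
  apply max_le (Real.abs_sin_le_one _)
  apply Real.exp_le_one_iff.2
  simp

lemma FT_ge (T : ℕ) (x : ℝ) : -(T:ℝ) ≤ FT T x := by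
  unfold FT
  rw [Real.le_log_iff_exp_le (FT_arg_pos T x)]
  exact le_max_right _ _

lemma sin_le_FT (T : ℕ) (x : ℝ) : |Real.sin (π * x)| ≤ Real.exp (FT T x) := by
  unfold FT
  rw [Real.exp_log (FT_arg_pos T x)]
  exact le_max_left _ _

/-- pointwise layer-cake bound -/
lemma FT_layer (T K : ℕ) (x : ℝ) (hx : Real.exp (-(K:ℝ)) ≤ |Real.sin (π * x)|) :
    FT T x - ∑ s ∈ Finset.Ico T K, (if |Real.sin (π * x)| < Real.exp (-(s:ℝ)) then (1:ℝ) else 0)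
      ≤ Real.log |Real.sin (π * x)| := by
  have hpos : 0 < |Real.sin (π * x)| := (Real.exp_pos _).trans_le hx
  set q := |Real.sin (π * x)| with hq
  have hK : -(K:ℝ) ≤ Real.log q := by rwa [Real.le_log_iff_exp_le hpos]
  by_cases hT : Real.exp (-(T:ℝ)) ≤ q
  · have : FT T x = Real.log q := by unfold FT; rw [← hq, max_eq_left hT]
    rw [this]
    have : 0 ≤ ∑ s ∈ Finset.Ico T K, (if q < Real.exp (-(s:ℝ)) then (1:ℝ) else 0) :=
      Finset.sum_nonneg (fun i _ => by split_ifs <;> norm_num)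
    linarith
  · push Not at hT
    have : FT T x = -T := by unfold FT; rw [← hq, max_eq_right hT.le, Real.log_exp]
    rw [this]
    have hlT : Real.log q < -T := by rwa [Real.log_lt_iff_lt_exp hpos]
    set t := -Real.log q with ht
    have hceil : ⌈t⌉₊ ≤ K := Nat.ceil_le.2 (by linarith)
    have hTc : T ≤ ⌈t⌉₊ := by
      have : (T:ℝ) ≤ ⌈t⌉₊ := le_trans (by linarith) (Nat.le_ceil t)
      exact_mod_cast this
    have h1 : ((⌈t⌉₊:ℝ) - T) ≤ ∑ s ∈ Finset.Ico T K, (if q < Real.exp (-(s:ℝ)) then (1:ℝ) else 0) := by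
      calc ((⌈t⌉₊:ℝ) - T) = ∑ s ∈ Finset.Ico T ⌈t⌉₊, (1:ℝ) := by
            simp [Nat.cast_sub hTc]
        _ ≤ ∑ s ∈ Finset.Ico T ⌈t⌉₊, (if q < Real.exp (-(s:ℝ)) then (1:ℝ) else 0) := by
            apply Finset.sum_le_sum
            intro s hs
            have hs' := (Finset.mem_Ico.1 hs).2
            have : (s:ℝ) < t := Nat.lt_ceil.1 hs'
            rw [if_pos]
            rw [← Real.log_lt_iff_lt_exp hpos]; linarith
        _ ≤ _ := by
            apply Finset.sum_le_sum_of_subset_of_nonneg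
            · exact Finset.Ico_subset_Ico_right hceil
            · intros; split_ifs <;> norm_num
    have := Nat.le_ceil t
    linarith

lemma log_lower {b r : ℝ} (h : DiophantineExp b r) (ε : ℝ) (hε : 0 < ε) :
    ∃ T : ℕ, ∀ (N : ℕ) (a : ℤ) (y : ℝ) (S : Finset ℤ) (K : ℕ),
    (∀ j ∈ S, a ≤ j ∧ j < a + N) →
    (∀ j ∈ S, Real.exp (-(K:ℝ)) ≤ |Real.sin (π * (y + j * b))|) →
    ∑ j ∈ S, FT T (y + j * b) - K - ε * N ≤ ∑ j ∈ S, Real.log |Real.sin (π * (y + j * b))| := by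
  have hr0 : 0 < r := by linarith [h.1]
  obtain ⟨C, hC, hcount⟩ := count_small h
  set q : ℝ := Real.exp (-1/r) with hq
  have hq0 : 0 < q := Real.exp_pos _
  have hq1 : q < 1 := by
    rw [hq, Real.exp_lt_one_iff]; apply div_neg_of_neg_of_pos <;> linarith
  have htail : ∀ T K : ℕ, ∑ s ∈ Finset.Ico T K, q ^ s ≤ q ^ T * (1 - q)⁻¹ := by
    intro T K
    rcases le_total T K with hTK | hTK
    · rw [Finset.sum_Ico_eq_sum_range]
      simp_rw [pow_add]
      rw [← Finset.mul_sum]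
      gcongr
      rw [← tsum_geometric_of_lt_one hq0.le hq1]
      exact (summable_geometric_of_lt_one hq0.le hq1).sum_le_tsum _ (fun i _ => by positivity)
    · rw [Finset.Ico_eq_empty_of_le hTK]; simp
      have : 0 < 1 - q := by linarith
      positivity
  obtain ⟨T, hT⟩ := exists_pow_lt_of_lt_one (show 0 < ε * (1-q) / C by
    have : 0 < 1 - q := by linarith
    positivity) hq1
  refine ⟨T, fun N a y S K hS hlow => ?_⟩
  have h1 : ∑ j ∈ S, (FT T (y + j*b) - ∑ s ∈ Finset.Ico T K,
      (if |Real.sin (π * (y + j*b))| < Real.exp (-(s:ℝ)) then (1:ℝ) else 0)) ≤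
      ∑ j ∈ S, Real.log |Real.sin (π * (y + j * b))| :=
    Finset.sum_le_sum (fun j hj => FT_layer T K _ (hlow j hj))
  rw [Finset.sum_sub_distrib, Finset.sum_comm] at h1
  have h2 : ∑ s ∈ Finset.Ico T K, ∑ j ∈ S,
      (if |Real.sin (π * (y + j*b))| < Real.exp (-(s:ℝ)) then (1:ℝ) else 0) ≤
      ∑ s ∈ Finset.Ico T K, (1 + C * N * q ^ s) := by
    apply Finset.sum_le_sum
    intro s _
    rw [Finset.sum_boole]
    have := hcount N a y s (S.filter (fun j : ℤ => |Real.sin (π * (y + j*b))| < Real.exp (-(s:ℝ))))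
      (fun j hj => hS j (Finset.mem_filter.1 hj).1) (fun j hj => (Finset.mem_filter.1 hj).2)
    refine this.trans (le_of_eq ?_)
    rw [hq, ← Real.exp_nat_mul]
    ring_nf
  have h3 : ∑ s ∈ Finset.Ico T K, (1 + C * N * q ^ s) ≤ K + ε * N := by
    rw [Finset.sum_add_distrib, ← Finset.mul_sum]
    have h4 : ∑ s ∈ Finset.Ico T K, (1:ℝ) ≤ K := by
      simp
    have h5 : C * N * ∑ s ∈ Finset.Ico T K, q ^ s ≤ ε * N := by
      have hq1' : 0 < 1 - q := by linarith
      rw [lt_div_iff₀ hC] at hT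
      calc C * N * ∑ s ∈ Finset.Ico T K, q ^ s ≤ C * N * (q ^ T * (1-q)⁻¹) := by
            gcongr; exact htail T K
        _ = N * (q^T * C) * (1-q)⁻¹ := by ring
        _ ≤ N * (ε * (1-q)) * (1-q)⁻¹ := by gcongr
        _ = ε * N := by field_simp
    linarith
  linarith

open scoped Real

lemma lagrange_eval (Q : Polynomial ℝ) (I : Finset ℤ) (z : ℤ → ℝ) (hz : Set.InjOn z I)
    (hQ : Q.degree < (I.card : WithBot ℕ)) (w : ℝ) :
    Q.eval w = ∑ i ∈ I, Q.eval (z i) * ∏ j ∈ I.erase i, (w - z j) / (z i - z j) := by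
  conv_lhs => rw [Lagrange.eq_interpolate hz hQ]
  rw [Lagrange.interpolate_apply, Polynomial.eval_finsetSum]
  refine Finset.sum_congr rfl fun i _ => ?_
  rw [Polynomial.eval_mul, Polynomial.eval_C, Lagrange.basis, Polynomial.eval_prod]
  congr 1
  refine Finset.prod_congr rfl fun j _ => ?_
  simp [Lagrange.basisDivisor]
  ring

lemma cos_diff (A B : ℝ) : |Real.cos (2*π*A) - Real.cos (2*π*B)| =
    2 * (|Real.sin (π * (A+B))| * |Real.sin (π * (B-A))|) := by
  rw [Real.cos_sub_cos, abs_mul, abs_mul]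
  have h1 : (2*π*A+2*π*B)/2 = π*(A+B) := by ring
  have h2 : (2*π*A-2*π*B)/2 = -(π*(B-A)) := by ring
  rw [h1, h2, Real.sin_neg, abs_neg]
  norm_num
  ring

/-- Weyl sum over an integer interval. -/
lemma weyl_Ico (b : ℝ) (hb : Irrational b) (f : ℝ → ℝ) (hf : Continuous f)
    (hper : Function.Periodic f 1) (ε : ℝ) (hε : 0 < ε) :
    ∃ C, 0 ≤ C ∧ ∀ (a : ℤ) (N : ℕ) (x : ℝ),
      |∑ j ∈ Finset.Ico a (a+N), f (x + j*b) - N * ∫ y in (0:ℝ)..1, f y| ≤ ε*N + C := by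
  obtain ⟨C, hC, h⟩ := weyl b hb f hf hper ε hε
  refine ⟨C, hC, fun a N x => ?_⟩
  have := h N (x + a*b)
  convert this using 4
  rw [Int.Ico_eq_finset_map]
  rw [Finset.sum_map]
  have : (a + (N:ℤ) - a).toNat = N := by simp
  rw [this]
  refine Finset.sum_congr rfl fun j _ => ?_
  simp
  ring_nf

/-- two segments -/
noncomputable def seg2 (a1 a2 : ℤ) (l1 l2 : ℕ) : Finset ℤ := Finset.Ico a1 (a1+l1) ∪ Finset.Ico a2 (a2+l2)

lemma seg2_sum (a1 a2 : ℤ) (l1 l2 : ℕ) (h : a1 + l1 ≤ a2) (f : ℤ → ℝ) :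
    ∑ j ∈ seg2 a1 a2 l1 l2, f j = ∑ j ∈ Finset.Ico a1 (a1+l1), f j + ∑ j ∈ Finset.Ico a2 (a2+l2), f j := by
  unfold seg2
  rw [Finset.sum_union]
  rw [Finset.disjoint_left]
  intro x hx hx'
  rw [Finset.mem_Ico] at hx hx'
  omega

lemma seg2_card (a1 a2 : ℤ) (l1 l2 : ℕ) (h : a1 + l1 ≤ a2) : (seg2 a1 a2 l1 l2).card = l1 + l2 := by
  unfold seg2
  rw [Finset.card_union_of_disjoint]
  · simp
  rw [Finset.disjoint_left]
  intro x hx hx'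
  rw [Finset.mem_Ico] at hx hx'
  omega

lemma FT_seg {b : ℝ} (hb : Irrational b) (T : ℕ) (ε : ℝ) (hε : 0 < ε) :
    ∃ C, 0 ≤ C ∧ ∀ (a1 a2 : ℤ) (l1 l2 : ℕ), a1 + l1 ≤ a2 → ∀ (y : ℝ), ∀ i ∈ seg2 a1 a2 l1 l2,
      |∑ j ∈ (seg2 a1 a2 l1 l2).erase i, FT T (y + j*b) - (l1+l2) * ∫ y in (0:ℝ)..1, FT T y| ≤
        ε*(l1+l2) + C := by
  obtain ⟨C, hC, h⟩ := weyl_Ico b hb (FT T) (FT_cont T) (FT_per T) ε hε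
  refine ⟨2*C+T, by positivity, fun a1 a2 l1 l2 ha y i hi => ?_⟩
  have h0 := Finset.sum_erase_add _ (fun j : ℤ => FT T (y + j*b)) hi
  rw [seg2_sum _ _ _ _ ha] at h0
  have h1 := h a1 l1 y
  have h2 := h a2 l2 y
  have h3 := FT_le T (y + i*b)
  have h4 := FT_ge T (y + i*b)
  rw [abs_le] at *
  constructor <;> linarith

lemma den_sum {α b : ℝ} (hα : α ∈ Set.Ioo (-1:ℝ) 1) (hb : Irrational b) (ε : ℝ) (hε : 0 < ε) :
    ∃ C, 0 ≤ C ∧ ∀ (k : ℕ) (x y : ℝ), ∏ j ∈ Finset.range k, den α (x + j*b) ≤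
      Real.exp (ε * k + C) * ∏ j ∈ Finset.range k, den α (y + j*b) := by
  obtain ⟨C, hC, h⟩ := weyl b hb (fun x => Real.log (den α x))
    ((den_cont α).log (fun x => (den_pos hα x).ne'))
    (fun x => by simp only [den_per α x]) (ε/2) (by positivity)
  refine ⟨2*C, by positivity, fun k x y => ?_⟩
  have hp : ∀ z : ℝ, ∏ j ∈ Finset.range k, den α (z + j*b) =
      Real.exp (∑ j ∈ Finset.range k, Real.log (den α (z + j*b))) := by
    intro z
    rw [Real.exp_sum]
    exact Finset.prod_congr rfl fun j _ => (Real.exp_log (den_pos hα _)).symm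
  rw [hp, hp, ← Real.exp_add, Real.exp_le_exp]
  have h1 := h k x
  have h2 := h k y
  rw [abs_le] at h1 h2
  linarith

lemma prod_abs_sin_le (T : ℕ) (b y : ℝ) (S : Finset ℤ) :
    ∏ j ∈ S, |Real.sin (π * (y + j*b))| ≤ Real.exp (∑ j ∈ S, FT T (y + j*b)) := by
  rw [Real.exp_sum]
  exact Finset.prod_le_prod (fun _ _ => abs_nonneg _) (fun j _ => sin_le_FT T _)

lemma prod_abs_sin_eq (b y : ℝ) (S : Finset ℤ) (h : ∀ j ∈ S, 0 < |Real.sin (π * (y + j*b))|) :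
    ∏ j ∈ S, |Real.sin (π * (y + j*b))| = Real.exp (∑ j ∈ S, Real.log |Real.sin (π * (y + j*b))|) := by
  rw [Real.exp_sum]
  exact Finset.prod_congr rfl fun j hj => (Real.exp_log (h j hj)).symm

lemma node_upper {α lam b r E : ℝ} (hα : α ∈ Set.Ioo (-1:ℝ) 1) (hb : Irrational b)
    (hd : DiophantineExp b r) (ε : ℝ) (hε : 0 < ε) :
    ∃ C : ℝ, ∀ (k N K l1 l2 : ℕ) (a1 a2 : ℤ) (θ M : ℝ), a1 + l1 ≤ a2 → l1 + l2 = k + 1 →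
      a2 + l2 ≤ a1 + N →
      (∀ i ∈ seg2 a1 a2 l1 l2, ∀ j ∈ seg2 a1 a2 l1 l2, i ≠ j →
        Real.exp (-(K:ℝ)) ≤ |Real.sin (π * (((j - i : ℤ):ℝ) * b))|) →
      (∀ i ∈ seg2 a1 a2 l1 l2, ∀ j ∈ seg2 a1 a2 l1 l2, i ≠ j →
        Real.exp (-(K:ℝ)) ≤ |Real.sin (π * (2 * θ + ((i + j + k - 1 : ℤ):ℝ) * b))|) →
      (∀ j ∈ seg2 a1 a2 l1 l2, |pd (potV α lam) b E k (θ + j*b)| ≤ M) →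
      ∀ x : ℝ, |pd (potV α lam) b E k x| ≤ M * ((k+1) * Real.exp (C + 2*K + ε * (k + 1 + N))) := by
  obtain ⟨T, hT⟩ := log_lower hd (ε/6) (by positivity)
  obtain ⟨C1, hC1, hF⟩ := FT_seg hb T (ε/6) (by positivity)
  obtain ⟨C2, hC2, hD⟩ := den_sum hα hb (ε/6) (by positivity)
  refine ⟨4*C1 + C2, fun k N K l1 l2 a1 a2 θ M ha hl hN hs1 hs2 hM x => ?_⟩
  obtain ⟨Q, hQd, hQ⟩ := Rd_poly hα lam b E k
  set I := seg2 a1 a2 l1 l2 with hI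
  have hcard : I.card = k + 1 := by rw [hI, seg2_card _ _ _ _ ha, hl]
  have hIr : ∀ j ∈ I, a1 ≤ j ∧ j < a1 + N := by
    intro j hj
    rw [hI, seg2, Finset.mem_union, Finset.mem_Ico, Finset.mem_Ico] at hj
    omega
  set φ : ℤ → ℝ := fun j => θ + j*b + ((k:ℝ)-1)/2*b with hφ
  set z : ℤ → ℝ := fun j => Real.cos (2*π*φ j) with hz
  set P : ℝ := x + ((k:ℝ)-1)/2*b with hP
  set W : ℝ := θ + ((k:ℝ)-1)/2*b with hW
  have hnum : ∀ j, |Real.cos (2*π*P) - z j| =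
      2 * (|Real.sin (π * ((P+W) + j*b))| * |Real.sin (π * ((W-P) + j*b))|) := by
    intro j
    rw [hz, cos_diff]
    simp only [hφ, hW]
    ring_nf
  have hden : ∀ i j, |z i - z j| =
      2 * (|Real.sin (π * ((φ i+W) + j*b))| * |Real.sin (π * ((W-φ i) + j*b))|) := by
    intro i j
    simp only [hz]
    rw [cos_diff]
    simp only [hφ, hW]
    ring_nf
  have hl1 : ∀ i ∈ I, ∀ j ∈ I.erase i, Real.exp (-(K:ℝ)) ≤ |Real.sin (π * ((φ i+W) + j*b))| := by
    intro i hi j hj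
    have := hs2 i hi j (Finset.mem_of_mem_erase hj) (Finset.ne_of_mem_erase hj).symm
    convert this using 4
    simp only [hφ, hW]; push_cast; ring
  have hl2 : ∀ i ∈ I, ∀ j ∈ I.erase i, Real.exp (-(K:ℝ)) ≤ |Real.sin (π * ((W-φ i) + j*b))| := by
    intro i hi j hj
    have := hs1 i hi j (Finset.mem_of_mem_erase hj) (Finset.ne_of_mem_erase hj).symm
    convert this using 4
    simp only [hφ, hW]; push_cast; ring
  have hinj : Set.InjOn z I := by
    intro i hi j hj hij
    by_contra hne
    have hj' : j ∈ I.erase i := Finset.mem_erase.2 ⟨fun h => hne h.symm, hj⟩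
    have h1 := hl1 i hi j hj'
    have h2 := hl2 i hi j hj'
    have h3 := hden i j
    rw [hij, sub_self, abs_zero] at h3
    have := Real.exp_pos (-(K:ℝ))
    have : 0 < |Real.sin (π * ((φ i+W) + j*b))| * |Real.sin (π * ((W-φ i) + j*b))| :=
      mul_pos (by linarith) (by linarith)
    linarith
  set R : ℝ := Real.exp (4*C1 + 2*K + (ε/6)*(4*(k+1) + 2*N)) with hR
  have hratio : ∀ i ∈ I, |∏ j ∈ I.erase i, (Real.cos (2*π*P) - z j) / (z i - z j)| ≤ R := by
    intro i hi
    rw [Finset.abs_prod]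
    simp_rw [abs_div]
    rw [Finset.prod_div_distrib]
    have hS : ∀ j ∈ I.erase i, a1 ≤ j ∧ j < a1 + N := fun j hj => hIr j (Finset.mem_of_mem_erase hj)
    have d1 := hT N a1 (φ i+W) (I.erase i) K hS (hl1 i hi)
    have d2 := hT N a1 (W-φ i) (I.erase i) K hS (hl2 i hi)
    have f1 := hF a1 a2 l1 l2 ha (φ i + W) i hi
    have f2 := hF a1 a2 l1 l2 ha (W - φ i) i hi
    have f3 := hF a1 a2 l1 l2 ha (P + W) i hi
    have f4 := hF a1 a2 l1 l2 ha (W - P) i hi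
    have hll : (l1:ℝ) + l2 = k + 1 := by exact_mod_cast hl
    rw [hll] at f1 f2 f3 f4
    rw [← hI, abs_le] at f1 f2 f3 f4
    have hn : ∏ j ∈ I.erase i, |Real.cos (2*π*P) - z j| ≤ 2^(I.erase i).card *
        Real.exp (∑ j ∈ I.erase i, FT T ((P+W) + j*b) + ∑ j ∈ I.erase i, FT T ((W-P) + j*b)) := by
      simp_rw [hnum]
      rw [Finset.prod_mul_distrib, Finset.prod_mul_distrib, Finset.prod_const, Real.exp_add]
      refine mul_le_mul_of_nonneg_left ?_ (by positivity)
      exact mul_le_mul (prod_abs_sin_le T b _ _) (prod_abs_sin_le T b _ _)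
        (Finset.prod_nonneg fun j _ => abs_nonneg (Real.sin _)) (Real.exp_pos _).le
    have hdn : ∏ j ∈ I.erase i, |z i - z j| = 2^(I.erase i).card *
        Real.exp (∑ j ∈ I.erase i, Real.log |Real.sin (π * ((φ i+W) + j*b))| +
          ∑ j ∈ I.erase i, Real.log |Real.sin (π * ((W-φ i) + j*b))|) := by
      simp_rw [hden]
      rw [Finset.prod_mul_distrib, Finset.prod_mul_distrib, Finset.prod_const, Real.exp_add,
        prod_abs_sin_eq, prod_abs_sin_eq]
      · exact fun j hj => (Real.exp_pos _).trans_le (hl2 i hi j hj)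
      · exact fun j hj => (Real.exp_pos _).trans_le (hl1 i hi j hj)
    rw [hdn, div_le_iff₀ (by positivity)]
    refine hn.trans ?_
    rw [hR, mul_left_comm, ← Real.exp_add]
    refine mul_le_mul_of_nonneg_left (Real.exp_le_exp.2 ?_) (by positivity)
    linarith
  have hDpos : ∀ y : ℝ, 0 < ∏ j ∈ Finset.range k, den α (y + j*b) :=
    fun y => Finset.prod_pos fun j _ => den_pos hα _
  have hM0 : 0 ≤ M := by
    obtain ⟨i, hi⟩ : I.Nonempty := Finset.card_pos.1 (by omega)
    exact (abs_nonneg _).trans (hM i hi)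
  have hQi : ∀ i ∈ I, |Q.eval (z i)| ≤ M * (Real.exp (ε/6 * k + C2) * ∏ j ∈ Finset.range k, den α (x + j*b)) := by
    intro i hi
    have := hQ (θ + i*b)
    rw [hz]
    simp only [hφ]
    rw [← this, Rd, abs_mul, abs_of_pos (hDpos _)]
    exact mul_le_mul (hM i hi) (hD k _ _) (hDpos _).le hM0
  have hfin : |Q.eval (Real.cos (2*π*P))| ≤ ∑ i ∈ I,
      M * (Real.exp (ε/6 * k + C2) * ∏ j ∈ Finset.range k, den α (x + j*b)) * R := by
    rw [lagrange_eval Q I z hinj (by rw [hcard]; exact hQd)]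
    refine (Finset.abs_sum_le_sum_abs _ _).trans (Finset.sum_le_sum fun i hi => ?_)
    rw [abs_mul]
    have := hDpos x
    exact mul_le_mul (hQi i hi) (hratio i hi) (abs_nonneg _) (by positivity)
  rw [← hQ x, Rd, abs_mul, abs_of_pos (hDpos x), Finset.sum_const, hcard, nsmul_eq_mul] at hfin
  have h5 : |pd (potV α lam) b E k x| ≤ M * ((k+1) * (Real.exp (ε/6 * k + C2) * R)) := by
    refine le_of_mul_le_mul_right ?_ (hDpos x)
    refine hfin.trans (le_of_eq ?_)
    push_cast; ring
  refine h5.trans ?_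
  rw [hR, ← Real.exp_add]
  refine mul_le_mul_of_nonneg_left (mul_le_mul_of_nonneg_left (Real.exp_le_exp.2 ?_) (by positivity)) hM0
  have : 0 ≤ ε * N := by positivity
  have : 0 ≤ ε * k := by positivity
  nlinarith

open scoped Real

lemma sqrt_lin (A B ρ : ℝ) (hA : 0 ≤ A) (hB : 0 ≤ B) (hρ : 0 < ρ) :
    ∃ k0 : ℕ, ∀ k : ℕ, k0 ≤ k → A * √k + B ≤ ρ * k := by
  obtain ⟨k0, hk0⟩ := exists_nat_ge (((A+B)/ρ + 1)^2)
  refine ⟨k0, fun k hk => ?_⟩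
  have hk' : ((A+B)/ρ + 1)^2 ≤ (k:ℝ) := hk0.trans (by exact_mod_cast hk)
  have hs : (A+B)/ρ + 1 ≤ √k := Real.le_sqrt_of_sq_le hk'
  have h2 : √(k:ℝ) * √k = k := Real.mul_self_sqrt (by positivity)
  have h0 : 0 ≤ (A+B)/ρ := by positivity
  have h1 : (A+B) ≤ ρ * √k := by
    have : (A+B)/ρ ≤ √k := by linarith
    rw [div_le_iff₀ hρ] at this
    linarith
  have h3 : ρ * k = (ρ * √k) * √k := by rw [mul_assoc, h2]
  rw [h3]
  nlinarith

lemma log_le_two_sqrt (x : ℝ) (hx : 0 < x) : Real.log x ≤ 2 * √x := by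
  have h : Real.log x = 2 * Real.log (√x) := by
    rw [Real.log_sqrt hx.le]; ring
  rw [h]
  have := Real.log_le_sub_one_of_pos (Real.sqrt_pos.2 hx)
  linarith

lemma sqrt_affine (a c k : ℝ) (hk : 0 ≤ k) (ha : 0 ≤ a) (hc : 0 ≤ c) :
    √(a^2*k + c^2) ≤ a * √k + c := by
  rw [Real.sqrt_le_left (by positivity)]
  have := Real.sq_sqrt hk
  have : 0 ≤ a * √k * c := by positivity
  nlinarith

lemma poly_exp (D p ρ : ℝ) (hD : 0 < D) (hp : 0 ≤ p) (hρ : 0 < ρ) :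
    ∃ k0 : ℕ, ∀ k : ℕ, k0 ≤ k → D * (2*(k:ℝ)+21)^p ≤ Real.exp (ρ * k) := by
  obtain ⟨k0, hk0⟩ := sqrt_lin (4*p) (|Real.log D| + 10*p) ρ (by positivity) (by positivity) hρ
  refine ⟨k0, fun k hk => ?_⟩
  have h := hk0 k hk
  have hx : (0:ℝ) < 2*(k:ℝ)+21 := by positivity
  rw [← Real.exp_log hD, Real.rpow_def_of_pos hx, ← Real.exp_add, Real.exp_le_exp]
  have h1 := log_le_two_sqrt _ hx
  have h2 : √(2*(k:ℝ)+21) ≤ 2 * √k + 5 := by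
    refine le_trans (Real.sqrt_le_sqrt ?_) (sqrt_affine 2 5 k (by positivity) (by norm_num) (by norm_num))
    nlinarith [(Nat.cast_nonneg k : (0:ℝ) ≤ k)]
  have h3 : Real.log (2*(k:ℝ)+21) ≤ 4 * √k + 10 := by linarith
  have := le_abs_self (Real.log D)
  nlinarith

lemma nonres_bound {b r θ : ℝ} (h : NonResonant b r θ) : ∃ M : ℕ, ∀ m : ℤ, (M:ℤ) < m →
    Real.exp (-((m:ℝ) ^ (1/(2*r)))) ≤ |Real.sin (π * (2*θ + m * b))| := by
  unfold NonResonant at h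
  obtain ⟨B, hB⟩ := h.bddAbove
  refine ⟨B.toNat, fun m hm => ?_⟩
  by_contra hc
  push Not at hc
  have hm0 : 0 < m := by omega
  have : m ≤ B := by
    apply hB
    change |Real.sin (2 * Real.pi * (θ + (m : ℝ) * b / 2))| < Real.exp (-(|(m : ℝ)| ^ (1 / (2 * r))))
    rw [abs_of_pos (show (0:ℝ) < m by exact_mod_cast hm0)]
    have e : 2 * π * (θ + (m : ℝ) * b / 2) = π * (2*θ + m * b) := by ring
    rw [e]
    exact hc
  omega

lemma node_exists {α lam b r E θ : ℝ} (hα : α ∈ Set.Ioo (-1:ℝ) 1) (hb : Irrational b)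
    (hd : DiophantineExp b r) (hL : 0 < lyap (potV α lam) b E)
    (M : ℕ) (hM : ∀ m : ℤ, (M:ℤ) < m →
      Real.exp (-((m:ℝ) ^ (1/(2*r)))) ≤ |Real.sin (π * (2*θ + m * b))|)
    (ρ : ℝ) (hρ : 0 < ρ) :
    ∃ g0 : ℕ, ∀ g : ℕ, g0 ≤ g → ∀ (n y0 : ℤ), 0 ≤ y0 → y0 ≤ 1 → 4*g+M+13 ≤ n → n ≤ 4*g+M+16 →
      ∃ k : ℕ, 6*g+M+8 ≤ k ∧ k ≤ 6*g+M+10 ∧ ∃ j : ℤ,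
        ((y0 - 3*g ≤ j ∧ j ≤ y0 - g) ∨ (n - (k-1-g) ≤ j ∧ j ≤ n - g)) ∧
        Real.exp (k * (lyap (potV α lam) b E - ρ)) < |pd (potV α lam) b E k (θ + j*b)| := by
  obtain ⟨C, hC⟩ := node_upper (lam := lam) (E := E) hα hb hd (ρ/4) (by positivity)
  obtain ⟨c, hc, hlow⟩ := lower (potV α lam) (potV_cont hα lam) b E hL
  obtain ⟨hr, cd, hcd, hdio⟩ := dio_pi hd
  obtain ⟨k0, hk0⟩ := sqrt_lin (2 + 2*(2 + 2*r)) (2 + 2*(5 + 8*r + |Real.log cd| + 1) + |C| + 11*ρ + |Real.log c| + 1)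
    (ρ/2) (by positivity) (by positivity) (by positivity)
  refine ⟨k0, fun g hg n y0 hy0 hy1 hn1 hn2 => ?_⟩
  obtain ⟨k, hk2, hk1, x, hx⟩ := hlow (6*g+M+8)
  refine ⟨k, hk1, by omega, ?_⟩
  by_contra hcon
  push Not at hcon
  have hkpos : (0:ℝ) ≤ k := by positivity
  set Kr : ℝ := √(3*(k:ℝ)+16) + r * Real.log (k+10) + |Real.log cd| with hKr
  have hlogk : 0 ≤ Real.log ((k:ℝ)+10) := Real.log_nonneg (by linarith)
  have hKr0 : 0 ≤ Kr := by
    have : 0 ≤ r * Real.log ((k:ℝ)+10) := mul_nonneg (by linarith) hlogk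
    positivity
  set K := ⌈Kr⌉₊ with hK
  have hKK : Kr ≤ K := Nat.le_ceil _
  have hK1 : (K:ℝ) < Kr + 1 := Nat.ceil_lt_add_one hKr0
  have key := hC k (k+10) K (2*g+1) (k-2*g) (y0 - 3*g) (n - (k-1-g)) θ
    (Real.exp (k * (lyap (potV α lam) b E - ρ))) (by omega) (by omega) (by omega)
    ?_ ?_ ?_ x
  · have h1 := hx.trans key
    have hk01 : (0:ℝ) < (k:ℝ)+1 := by positivity
    rw [← Real.exp_log hc, ← Real.exp_log hk01, ← Real.exp_add, ← Real.exp_add, ← Real.exp_add,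
      Real.exp_le_exp] at h1
    have hs := hk0 k (by omega)
    have e1 : √(3*(k:ℝ)+16) ≤ 2 * √k + 4 :=
      le_trans (Real.sqrt_le_sqrt (by linarith)) (sqrt_affine 2 4 k hkpos (by norm_num) (by norm_num))
    have e2 : Real.log ((k:ℝ)+10) ≤ 2 * √k + 8 := by
      have := log_le_two_sqrt ((k:ℝ)+10) (by positivity)
      have h3 : √((k:ℝ)+10) ≤ 1 * √k + 4 :=
        le_trans (Real.sqrt_le_sqrt (by linarith)) (sqrt_affine 1 4 k hkpos (by norm_num) (by norm_num))
      linarith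
    have e3 : Real.log ((k:ℝ)+1) ≤ 2 * √k + 2 := by
      have := log_le_two_sqrt ((k:ℝ)+1) (by positivity)
      have h3 : √((k:ℝ)+1) ≤ 1 * √k + 1 :=
        le_trans (Real.sqrt_le_sqrt (by linarith)) (sqrt_affine 1 1 k hkpos (by norm_num) (by norm_num))
      linarith
    have e4 : r * Real.log ((k:ℝ)+10) ≤ r * (2 * √k + 8) :=
      mul_le_mul_of_nonneg_left e2 (by linarith)
    have e5 := le_abs_self C
    have e6 := neg_abs_le (Real.log c)
    push_cast at h1
    rw [Real.exp_log hk01] at h1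
    linarith
  · intro i hi j hj hij
    have hd0 : j - i ≠ 0 := by omega
    have h1 := hdio (j - i) hd0
    refine le_trans ?_ h1.le
    have habs : |((j - i : ℤ):ℝ)| ≤ k + 10 := by
      rw [seg2, Finset.mem_union, Finset.mem_Ico, Finset.mem_Ico] at hi hj
      have : |j - i| ≤ (k:ℤ) + 10 := by rw [abs_le]; omega
      exact_mod_cast this
    have habs0 : 0 < |((j - i : ℤ):ℝ)| := by
      rw [abs_pos]; exact_mod_cast hd0
    have h2 : cd / ((k:ℝ)+10)^r ≤ cd / |((j - i : ℤ):ℝ)|^r := by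
      gcongr
    refine le_trans ?_ h2
    rw [Real.rpow_def_of_pos (by positivity), ← Real.exp_log hcd, ← Real.exp_sub, Real.exp_le_exp]
    have := neg_abs_le (Real.log cd)
    have := Real.sqrt_nonneg (3*(k:ℝ)+16)
    linarith
  · intro i hi j hj hij
    rw [seg2, Finset.mem_union, Finset.mem_Ico, Finset.mem_Ico] at hi hj
    have hm1 : (M:ℤ) < i + j + k - 1 := by omega
    have hm2 : i + j + k - 1 ≤ 3*k+16 := by omega
    refine le_trans ?_ (hM _ hm1)
    rw [Real.exp_le_exp]
    have hmr1 : (1:ℝ) ≤ ((i + j + k - 1 : ℤ):ℝ) := by exact_mod_cast (by omega)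
    have hmr2 : ((i + j + k - 1 : ℤ):ℝ) ≤ 3*k+16 := by exact_mod_cast hm2
    have h3 : ((i + j + k - 1 : ℤ):ℝ)^(1/(2*r)) ≤ √(3*(k:ℝ)+16) := by
      refine le_trans (Real.rpow_le_rpow_of_exponent_le hmr1 (show 1/(2*r) ≤ 1/2 from ?_)) ?_
      · apply one_div_le_one_div_of_le <;> linarith
      · rw [← Real.sqrt_eq_rpow]; exact Real.sqrt_le_sqrt hmr2
    have : 0 ≤ r * Real.log ((k:ℝ)+10) := mul_nonneg (by linarith) hlogk
    have := abs_nonneg (Real.log cd)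
    linarith
  · intro j hj
    rw [seg2, Finset.mem_union, Finset.mem_Ico, Finset.mem_Ico] at hj
    apply hcon
    omega

lemma green_bound {V : ℝ → ℝ} {b E θ L ρ Cf B : ℝ} (hρ : 0 ≤ ρ) (hLp : 0 ≤ L) (hCf : 0 < Cf)
    (hf : ∀ l x, |pd V b E l x| ≤ Cf * Real.exp (l * (L + ρ)))
    (u : ℤ → ℝ) (heq : ∀ n : ℤ, u (n + 1) + u (n - 1) + V ((n : ℝ) * b + θ) * u n = E * u n)
    (j p : ℤ) (k g : ℕ) (hp1 : j + g ≤ p) (hp2 : p ≤ j + (k - 1 - g))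
    (hbig : Real.exp (k * (L - ρ)) < |pd V b E k (θ + j*b)|)
    (h1 : |u (j-1)| ≤ B) (h2 : |u (j+k)| ≤ B) :
    |u p| ≤ 2 * Cf * B * Real.exp (-(g * L) + 2 * ρ * k) := by
  obtain ⟨l, hl⟩ := Int.eq_ofNat_of_zero_le (show 0 ≤ p - j by omega)
  obtain ⟨m, hm⟩ := Int.eq_ofNat_of_zero_le (show 0 ≤ j + k - 1 - p by omega)
  have hk : k = l + 1 + m := by omega
  have hG := green V b E θ u heq j l m
  rw [← hk] at hG
  have e1 : j + (l:ℤ) = p := by omega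
  have e2 : j + (l:ℤ) + 1 + m = j + k := by omega
  rw [e2, e1] at hG
  have hB : 0 ≤ B := (abs_nonneg _).trans h1
  have hb1 : ∀ q : ℕ, q + 1 + g ≤ k → ∀ x, |pd V b E q x| ≤ Cf * Real.exp ((k - g) * (L + ρ)) := by
    intro q hq x
    refine (hf q x).trans ?_
    have : (q:ℝ) ≤ k - g := by
      have : ((q + 1 + g : ℕ):ℝ) ≤ k := by exact_mod_cast hq
      push_cast at this; linarith
    gcongr
  have ha : |pd V b E k (θ + j*b)| * |u p| ≤ 2 * (Cf * Real.exp ((k - g) * (L + ρ)) * B) := by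
    rw [← abs_mul, hG]
    refine (abs_add_le _ _).trans ?_
    rw [abs_mul, abs_mul]
    have x1 := mul_le_mul (hb1 m (by omega) (θ + ((p + 1 : ℤ):ℝ) * b)) h1 (abs_nonneg _) (by positivity)
    have x2 := mul_le_mul (hb1 l (by omega) (θ + (j:ℝ) * b)) h2 (abs_nonneg _) (by positivity)
    push_cast at x1 x2 ⊢
    linarith
  have hpos := Real.exp_pos (k * (L - ρ))
  have hb2 : Real.exp (k * (L - ρ)) * |u p| ≤ 2 * (Cf * Real.exp ((k - g) * (L + ρ)) * B) :=
    (mul_le_mul_of_nonneg_right hbig.le (abs_nonneg _)).trans ha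
  refine le_of_mul_le_mul_left (hb2.trans ?_) hpos
  have : Real.exp ((k - g) * (L + ρ)) ≤ Real.exp (k * (L - ρ)) * Real.exp (-(g * L) + 2 * ρ * k) := by
    rw [← Real.exp_add, Real.exp_le_exp]
    have : 0 ≤ (g:ℝ) * ρ := by positivity
    nlinarith
  calc 2 * (Cf * Real.exp ((k - g) * (L + ρ)) * B)
      ≤ 2 * (Cf * (Real.exp (k * (L - ρ)) * Real.exp (-(g * L) + 2 * ρ * k)) * B) := by gcongr
    _ = _ := by ring

open scoped Real

lemma exists_nonzero {V : ℝ → ℝ} {b E θ : ℝ} (u : ℤ → ℝ) (hu : u ≠ 0)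
    (heq : ∀ n : ℤ, u (n + 1) + u (n - 1) + V ((n : ℝ) * b + θ) * u n = E * u n) :
    ∃ y0 : ℤ, 0 ≤ y0 ∧ y0 ≤ 1 ∧ u y0 ≠ 0 := by
  by_contra hcon
  push Not at hcon
  have h0 := hcon 0 (by norm_num) (by norm_num)
  have h1 := hcon 1 (by norm_num) (by norm_num)
  have hpos : ∀ n : ℕ, u n = 0 ∧ u (n+1) = 0 := by
    intro n
    induction n with
    | zero => simpa using ⟨h0, h1⟩
    | succ n ih =>
      have := heq (n+1)
      simp only [add_sub_cancel_right] at this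
      rw [ih.1, ih.2] at this
      refine ⟨by exact_mod_cast ih.2, ?_⟩
      push_cast
      linarith
  have hneg : ∀ n : ℕ, u (-n) = 0 ∧ u (-n+1) = 0 := by
    intro n
    induction n with
    | zero => simpa using ⟨h0, h1⟩
    | succ n ih =>
      have := heq (-n)
      rw [ih.1, ih.2] at this
      have e1 : (-((n+1 : ℕ):ℤ)) = -n - 1 := by push_cast; ring
      have e2 : (-n - 1 : ℤ) + 1 = -n := by ring
      rw [e1, e2]
      exact ⟨by linarith, ih.1⟩
  apply hu
  funext n
  rcases Int.eq_nat_or_neg n with ⟨m, rfl | rfl⟩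
  · exact (hpos m).1
  · exact (hneg m).1

lemma pos_decay {α lam b θ r E : ℝ} (hα : α ∈ Set.Ioo (-1 : ℝ) 1)
    (hb : Irrational b) (hdio : DiophantineExp b r) (hres : NonResonant b r θ)
    (hL : 0 < lyap (potV α lam) b (E : ℂ))
    (u : ℤ → ℝ) (hu : u ≠ 0)
    (heq : ∀ n : ℤ, u (n + 1) + u (n - 1) + potV α lam ((n : ℝ) * b + θ) * u n = E * u n)
    (C δ : ℝ) (hgrow : ∀ n : ℤ, |u n| ≤ C * (1 + |(n : ℝ)|) ^ δ) :
    ∃ N : ℕ, ∀ n : ℤ, (N:ℤ) < n →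
      |u n| ≤ Real.exp (-(11/50 * lyap (potV α lam) b (E:ℂ) * n)) := by
  set L := lyap (potV α lam) b (E:ℂ) with hLdef
  obtain ⟨y0, hy0, hy1, huy⟩ := exists_nonzero u hu heq
  obtain ⟨M, hM⟩ := nonres_bound hres
  set ρ : ℝ := L / 600 with hρdef
  have hρ : 0 < ρ := by positivity
  obtain ⟨g0, hnode⟩ := node_exists (lam := lam) (E := E) hα hb hdio hL M hM ρ hρ
  obtain ⟨Cf, hCf, hf⟩ := furman (potV α lam) (potV_cont hα lam) (potV_per α lam) b hb E ρ hρ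
  have hC : 0 < C := by
    by_contra hc
    push Not at hc
    have h1 := hgrow y0
    have h2 : 0 < |u y0| := abs_pos.2 huy
    have h3 : 0 ≤ (1 + |(y0:ℝ)|)^δ := by positivity
    nlinarith
  obtain ⟨k1, hpoly⟩ := poly_exp (2*Cf*C) |δ| ρ (by positivity) (abs_nonneg _) hρ
  have hB : ∀ k : ℕ, ∀ q : ℤ, |q| ≤ 2*k+20 → |u q| ≤ C * (2*(k:ℝ)+21)^|δ| := by
    intro k q hq
    refine (hgrow q).trans ?_
    have hq' : |(q:ℝ)| ≤ 2*k+20 := by exact_mod_cast hq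
    have h1 : (1 + |(q:ℝ)|)^δ ≤ (1 + |(q:ℝ)|)^|δ| :=
      Real.rpow_le_rpow_of_exponent_le (by linarith [abs_nonneg (q:ℝ)]) (le_abs_self δ)
    have h2 : (1 + |(q:ℝ)|)^|δ| ≤ (2*(k:ℝ)+21)^|δ| :=
      Real.rpow_le_rpow (by positivity) (by linarith) (abs_nonneg _)
    exact mul_le_mul_of_nonneg_left (h1.trans h2) hC.le
  -- combined bound
  have hmain : ∀ g : ℕ, g0 ≤ g → k1 ≤ g → ∀ n : ℤ, 4*g+M+13 ≤ n → n ≤ 4*g+M+16 →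
      |u y0| ≤ Real.exp (-(97/100 * L * g) + L/200*(M+10)) ∨
      |u n| ≤ Real.exp (-(97/100 * L * g) + L/200*(M+10)) := by
    intro g hg hg1 n hn1 hn2
    obtain ⟨k, hk1, hk2, j, hj, hbig⟩ := hnode g hg n y0 hy0 hy1 hn1 hn2
    have hfin : ∀ p : ℤ, |u p| ≤ 2 * Cf * (C * (2*(k:ℝ)+21)^|δ|) * Real.exp (-(g * L) + 2 * ρ * k) →
        |u p| ≤ Real.exp (-(97/100 * L * g) + L/200*(M+10)) := by
      intro p hp
      refine hp.trans ?_
      have h1 := hpoly k (by omega)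
      calc 2 * Cf * (C * (2*(k:ℝ)+21)^|δ|) * Real.exp (-(g * L) + 2 * ρ * k)
          = (2 * Cf * C * (2*(k:ℝ)+21)^|δ|) * Real.exp (-(g * L) + 2 * ρ * k) := by ring
        _ ≤ Real.exp (ρ * k) * Real.exp (-(g * L) + 2 * ρ * k) := by gcongr
        _ ≤ _ := by
          rw [← Real.exp_add, Real.exp_le_exp]
          have hk' : (k:ℝ) ≤ 6*g+M+10 := by exact_mod_cast hk2
          have := mul_le_mul_of_nonneg_left hk' hρ.le
          rw [hρdef] at *
          linarith
    rcases hj with ⟨h1, h2⟩ | ⟨h1, h2⟩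
    · left
      apply hfin
      exact green_bound hρ.le hL.le hCf hf u heq j y0 k g (by omega) (by omega) hbig
        (hB k _ (by rw [abs_le]; omega)) (hB k _ (by rw [abs_le]; omega))
    · right
      apply hfin
      exact green_bound hρ.le hL.le hCf hf u heq j n k g (by omega) (by omega) hbig
        (hB k _ (by rw [abs_le]; omega)) (hB k _ (by rw [abs_le]; omega))
  -- exclude the first case
  have huy' : 0 < |u y0| := abs_pos.2 huy
  obtain ⟨g2, hg2⟩ := exists_nat_gt ((L/200*(M+10) - Real.log |u y0|) / (97/100*L))
  obtain ⟨n3, hn3⟩ := exists_nat_gt ((L/200*(M+10) + 97/100*L*(M+16)/4) / (L*(9/400)))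
  refine ⟨4*(g0+k1+g2)+M+16+n3, fun n hn => ?_⟩
  obtain ⟨g, hg1, hg2'⟩ : ∃ g : ℕ, 4*(g:ℤ)+M+13 ≤ n ∧ n ≤ 4*g+M+16 :=
    ⟨((n - M - 13)/4).toNat, by omega, by omega⟩
  rcases hmain g (by omega) (by omega) n hg1 hg2' with h | h
  · exfalso
    have hgg : (g2:ℝ) ≤ g := by exact_mod_cast (show g2 ≤ g by omega)
    have h5 := hg2.trans_le hgg
    rw [div_lt_iff₀ (by positivity)] at h5
    rw [← Real.log_le_iff_le_exp huy'] at h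
    linarith
  · refine h.trans (Real.exp_le_exp.2 ?_)
    have h6 : (n3:ℝ) ≤ n := by exact_mod_cast (show (n3:ℤ) ≤ n by omega)
    have h7 := hn3.trans_le h6
    rw [div_lt_iff₀ (by positivity)] at h7
    have h8 : (n:ℝ) ≤ 4*g+M+16 := by exact_mod_cast hg2'
    have := mul_le_mul_of_nonneg_left h8 hL.le
    linarith

lemma both_decay {α lam b θ r E : ℝ} (hα : α ∈ Set.Ioo (-1 : ℝ) 1)
    (hb : Irrational b) (hdio : DiophantineExp b r) (hres : NonResonant b r θ)
    (hL : 0 < lyap (potV α lam) b (E : ℂ))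
    (u : ℤ → ℝ) (hu : u ≠ 0)
    (heq : ∀ n : ℤ, u (n + 1) + u (n - 1) + potV α lam ((n : ℝ) * b + θ) * u n = E * u n)
    (C δ : ℝ) (hgrow : ∀ n : ℤ, |u n| ≤ C * (1 + |(n : ℝ)|) ^ δ) :
    ∃ N : ℕ, ∀ n : ℤ, (N:ℝ) < |(n:ℝ)| →
      |u n| ≤ Real.exp (-(11/50 * lyap (potV α lam) b (E:ℂ) * |(n:ℝ)|)) := by
  obtain ⟨N1, h1⟩ := pos_decay hα hb hdio hres hL u hu heq C δ hgrow
  have hres' : NonResonant b r (-θ) := by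
    unfold NonResonant at *
    have := hres.image (fun n : ℤ => -n)
    refine this.subset ?_
    intro n hn
    refine ⟨-n, ?_, by simp⟩
    change |Real.sin (2 * Real.pi * (θ + ((-n:ℤ) : ℝ) * b / 2))| < Real.exp (-(|((-n:ℤ) : ℝ)| ^ (1 / (2 * r))))
    change |Real.sin (2 * Real.pi * (-θ + (n : ℝ) * b / 2))| < Real.exp (-(|(n : ℝ)| ^ (1 / (2 * r)))) at hn
    have e : 2 * Real.pi * (θ + ((-n:ℤ) : ℝ) * b / 2) = -(2 * Real.pi * (-θ + (n : ℝ) * b / 2)) := by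
      push_cast; ring
    rw [e, Real.sin_neg, abs_neg]
    push_cast
    rw [abs_neg]
    exact hn
  obtain ⟨N2, h2⟩ := pos_decay hα hb hdio hres' hL (fun n => u (-n)) (by
      intro h
      apply hu
      funext n
      have := congrFun h (-n)
      simpa using this) (by
      intro n
      have := heq (-n)
      have e : (n:ℝ) * b + -θ = -(((-n : ℤ):ℝ) * b + θ) := by push_cast; ring
      rw [e, potV_even]
      have e1 : -(n+1) = -n - 1 := by ring
      have e2 : -(n-1) = -n + 1 := by ring
      simp only [e1, e2]
      linarith) C δ (by
      intro n
      have := hgrow (-n)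
      push_cast at this
      rwa [abs_neg] at this)
  refine ⟨N1 + N2, fun n hn => ?_⟩
  rcases le_total 0 n with h | h
  · have hn0 : (0:ℝ) ≤ n := by exact_mod_cast h
    rw [abs_of_nonneg hn0] at hn ⊢
    have hn' : ((N1 + N2 : ℕ):ℤ) < n := by exact_mod_cast hn
    exact h1 n (by push_cast at hn'; omega)
  · have hn0 : (n:ℝ) ≤ 0 := by exact_mod_cast h
    rw [abs_of_nonpos hn0] at hn ⊢
    have hn' : ((N1 + N2 : ℕ):ℤ) < -n := by exact_mod_cast hn
    have := h2 (-n) (by push_cast at hn'; omega)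
    simp only [neg_neg] at this
    push_cast at this ⊢
    exact this

lemma final_cmp (C δ L : ℝ) (hC : 0 < C) (hL : 0 < L) : ∃ N : ℕ, ∀ x : ℝ, (N:ℝ) < x →
    Real.exp (-(11/50*L*x)) ≤ 2*C*(2*x+1)^δ * Real.exp (-(L/5*x)) := by
  obtain ⟨k0, hk0⟩ := poly_exp ((2*C)⁻¹) |δ| (L/50) (by positivity) (abs_nonneg _) (by positivity)
  refine ⟨k0, fun x hx => ?_⟩
  have hx0 : 0 < x := lt_of_le_of_lt (by positivity) hx
  set k := ⌊x⌋₊ with hk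
  have hkx : (k:ℝ) ≤ x := Nat.floor_le hx0.le
  have hxk : x < k + 1 := Nat.lt_floor_add_one x
  have hkk : k0 ≤ k := Nat.le_floor hx.le
  have h := hk0 k hkk
  have h1 : (2*x+1)^|δ| ≤ (2*(k:ℝ)+21)^|δ| :=
    Real.rpow_le_rpow (by positivity) (by linarith) (abs_nonneg _)
  have h2 : (2*x+1)^(-|δ|) ≤ (2*x+1)^δ :=
    Real.rpow_le_rpow_of_exponent_le (by linarith) (neg_abs_le δ)
  have h3 : (2*x+1)^(-|δ|) = ((2*x+1)^|δ|)⁻¹ := Real.rpow_neg (by positivity) _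
  have hP : 0 < (2*x+1)^|δ| := by positivity
  have h4 : (2*C)⁻¹ * (2*x+1)^|δ| ≤ Real.exp (L/50*x) := by
    calc (2*C)⁻¹ * (2*x+1)^|δ| ≤ (2*C)⁻¹ * (2*(k:ℝ)+21)^|δ| := by gcongr
      _ ≤ Real.exp (L/50*k) := h
      _ ≤ _ := by gcongr
  have h5 : (1:ℝ) ≤ 2*C*(2*x+1)^δ * Real.exp (L/50*x) := by
    calc (1:ℝ) = 2*C*(2*x+1)^(-|δ|) * ((2*C)⁻¹ * (2*x+1)^|δ|) := by
          rw [h3]; field_simp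
      _ ≤ 2*C*(2*x+1)^δ * Real.exp (L/50*x) := by gcongr
  have e : Real.exp (-(L/5*x)) = Real.exp (L/50*x) * Real.exp (-(11/50*L*x)) := by
    rw [← Real.exp_add]; congr 1; ring
  rw [e, ← mul_assoc]
  exact le_mul_of_one_le_left (Real.exp_pos _).le h5

lemma summable_decay (u : ℤ → ℝ) (a : ℝ) (ha : 0 < a) (N : ℕ)
    (h : ∀ n : ℤ, (N:ℝ) < |(n:ℝ)| → |u n| ≤ Real.exp (-(a * |(n:ℝ)|))) :
    Summable (fun n : ℤ => (u n)^2) := by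
  have hg : Summable (fun n : ℕ => (Real.exp (-a)) ^ n) :=
    summable_geometric_of_lt_one (Real.exp_pos _).le (by rw [Real.exp_lt_one_iff]; linarith)
  have key : ∀ n : ℤ, (N:ℝ) < |(n:ℝ)| → (u n)^2 ≤ Real.exp (-(a * |(n:ℝ)|)) := by
    intro n hn
    have h1 := h n hn
    have h2 : Real.exp (-(a * |(n:ℝ)|)) ≤ 1 := by
      rw [Real.exp_le_one_iff]
      have : 0 ≤ a * |(n:ℝ)| := by positivity
      linarith
    rw [← sq_abs]
    nlinarith [abs_nonneg (u n)]
  apply Summable.of_nat_of_neg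
  · refine (summable_nat_add_iff (N+1)).1 ?_
    refine Summable.of_nonneg_of_le (fun _ => sq_nonneg _) (fun m => ?_) ((summable_nat_add_iff (N+1)).2 hg)
    have := key ((m + (N+1) : ℕ):ℤ) (by
      push_cast
      rw [abs_of_nonneg (by positivity)]
      have : (0:ℝ) ≤ m := by positivity
      linarith)
    refine this.trans (le_of_eq ?_)
    rw [← Real.exp_nat_mul, abs_of_nonneg (by positivity)]
    push_cast; ring_nf
  · refine (summable_nat_add_iff (N+1)).1 ?_
    refine Summable.of_nonneg_of_le (fun _ => sq_nonneg _) (fun m => ?_) ((summable_nat_add_iff (N+1)).2 hg)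
    have := key (-((m + (N+1) : ℕ):ℤ)) (by
      push_cast
      rw [abs_of_nonpos (by linarith [(Nat.cast_nonneg m : (0:ℝ) ≤ m), (Nat.cast_nonneg N : (0:ℝ) ≤ N)])]
      have : (0:ℝ) ≤ m := by positivity
      linarith)
    refine this.trans (le_of_eq ?_)
    rw [← Real.exp_nat_mul, Int.cast_neg, abs_neg, abs_of_nonneg (by positivity)]
    push_cast; ring_nf

/-- for Diophantine `b`, non-resonant `θ`, and `E` with `L(E) > 0`, every
nonzero polynomially bounded generalized eigenfunction `u` decays exponentially; in
particular `u ∈ ℓ²(ℤ)` and `E` is an eigenvalue of `H_{α,θ,b}` with exponentially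
decaying eigenfunction. -/
theorem anderson_localization_decay (α lam b θ r : ℝ) (hα : α ∈ Set.Ioo (-1 : ℝ) 1)
    (hb : Irrational b) (hdio : DiophantineExp b r) (hres : NonResonant b r θ)
    (H : lp (fun _ : ℤ => ℂ) 2 →L[ℂ] lp (fun _ : ℤ => ℂ) 2)
    (hH : IsSchrodingerOp (potV α lam) b θ H)
    (E : ℝ) (hL : 0 < lyap (potV α lam) b (E : ℂ))
    (u : ℤ → ℝ) (hu : u ≠ 0)
    (heq : ∀ n : ℤ, u (n + 1) + u (n - 1) + potV α lam ((n : ℝ) * b + θ) * u n = E * u n)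
    (C δ : ℝ)
    (hgrow : ∀ n : ℤ, |u n| ≤ C * (1 + |(n : ℝ)|) ^ δ) :
    (∀ ε : ℝ, 0 < ε → ε < lyap (potV α lam) b (E : ℂ) / 3 →
      ∃ N : ℕ, ∀ n : ℤ, (N : ℝ) < |(n : ℝ)| →
        |u n| ≤ 2 * C * (2 * |(n : ℝ)| + 1) ^ δ *
          Real.exp (-((lyap (potV α lam) b (E : ℂ) - ε) / 5) * (|(n : ℝ)| - 1))) ∧
    Summable (fun n : ℤ => (u n) ^ 2) ∧
    ∃ ψ : lp (fun _ : ℤ => ℂ) 2, ψ ≠ 0 ∧ H ψ = (E : ℂ) • ψ := by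
  obtain ⟨N1, hdec⟩ := both_decay hα hb hdio hres hL u hu heq C δ hgrow
  have hC : 0 < C := by
    obtain ⟨y0, hy0⟩ := Function.ne_iff.1 hu
    by_contra hc
    push Not at hc
    have h1 := hgrow y0
    have h2 : 0 < |u y0| := abs_pos.2 hy0
    have h3 : 0 ≤ (1 + |(y0:ℝ)|)^δ := by positivity
    nlinarith
  have hsum : Summable (fun n : ℤ => (u n) ^ 2) :=
    summable_decay u (11/50 * lyap (potV α lam) b (E:ℂ)) (by positivity) N1 hdec
  refine ⟨?_, hsum, ?_⟩
  · intro ε hε hε2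
    obtain ⟨N2, hcmp⟩ := final_cmp C δ _ hC hL
    refine ⟨N1 + N2, fun n hn => ?_⟩
    push_cast at hn
    have p1 : (0:ℝ) ≤ N1 := by positivity
    have p2 : (0:ℝ) ≤ N2 := by positivity
    refine (hdec n (by linarith)).trans ((hcmp _ (by linarith)).trans ?_)
    refine mul_le_mul_of_nonneg_left (Real.exp_le_exp.2 ?_) (by positivity)
    have : 0 ≤ ε * |(n:ℝ)| := by positivity
    nlinarith
  · have hmem : Memℓp (fun n : ℤ => ((u n : ℝ) : ℂ)) 2 := by
      apply memℓp_gen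
      simpa using hsum
    refine ⟨⟨_, hmem⟩, ?_, ?_⟩
    · intro h0
      apply hu
      funext n
      have := congrArg (fun w : lp (fun _ : ℤ => ℂ) 2 => (w : ∀ _ : ℤ, ℂ) n) h0
      simpa using this
    · apply lp.ext
      funext n
      rw [hH]
      have := heq n
      simp only [lp.coeFn_smul, Pi.smul_apply, smul_eq_mul]
      exact_mod_cast this
end

section
/- For every k ≥ 1 and every E ∈ ℝ there exist real coefficients b₀, …, b_k such that for every x ∈ ℝ, P_k(x,E) = (Σ_{j=0}^{k} b_j · cos(2π(x + (k−1)b/2))^j) / (∏_{j=0}^{k−1} (1 − αcos(2π(x+jb)))). -/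
open scoped Real

/-- The `k×k` tridiagonal matrix with diagonal entries `E - V(x+jb)`, `j = 0,…,k-1`, and
entries `-1` on the two adjacent diagonals. -/
noncomputable def Pmat (V : ℝ → ℝ) (b : ℝ) (k : ℕ) (x : ℝ) (E : ℝ) :
    Matrix (Fin k) (Fin k) ℝ :=
  fun i j =>
    if i = j then E - V (x + (i : ℝ) * b)
    else if (i : ℤ) = (j : ℤ) + 1 ∨ (j : ℤ) = (i : ℤ) + 1 then -1 else 0

/-- `P_k(x,E)`, the determinant of the box restriction `(H - E)|_{[0,k-1]}`. -/
noncomputable def Pdet (V : ℝ → ℝ) (b : ℝ) (k : ℕ) (x : ℝ) (E : ℝ) : ℝ :=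
  (Pmat V b k x E).det

open Polynomial in
/-- Trigonometric polynomials of degree at most `n`. -/
def IsTrig (n : ℕ) (f : ℝ → ℝ) : Prop :=
  ∃ A B : ℝ[X], A.natDegree ≤ n ∧ B.natDegree ≤ n ∧ (X * B).natDegree ≤ n ∧
    ∀ y, f y = A.eval (Real.cos (2 * Real.pi * y)) +
      Real.sin (2 * Real.pi * y) * B.eval (Real.cos (2 * Real.pi * y))

open Polynomial in
lemma IsTrig.add {n : ℕ} {f g : ℝ → ℝ} (hf : IsTrig n f) (hg : IsTrig n g) :
    IsTrig n (fun y => f y + g y) := by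
  obtain ⟨A, B, hA, hB, hXB, h⟩ := hf
  obtain ⟨A', B', hA', hB', hXB', h'⟩ := hg
  refine ⟨A + A', B + B', natDegree_add_le_of_degree_le hA hA',
    natDegree_add_le_of_degree_le hB hB', ?_, fun y => ?_⟩
  · rw [mul_add]; exact natDegree_add_le_of_degree_le hXB hXB'
  · simp only [h, h', eval_add]; ring

open Polynomial in
lemma IsTrig.mul {m n : ℕ} {f g : ℝ → ℝ} (hf : IsTrig m f) (hg : IsTrig n g) :
    IsTrig (m + n) (fun y => f y * g y) := by
  obtain ⟨A, B, hA, hB, hXB, h⟩ := hf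
  obtain ⟨A', B', hA', hB', hXB', h'⟩ := hg
  refine ⟨A * A' + (B * B' - (X * B) * (X * B')), A * B' + B * A', ?_, ?_, ?_, fun y => ?_⟩
  · exact natDegree_add_le_of_degree_le (natDegree_mul_le_of_le hA hA')
      (natDegree_sub_le_of_le (natDegree_mul_le_of_le hB hB')
        (natDegree_mul_le_of_le hXB hXB') |>.trans (by simp))
  · exact natDegree_add_le_of_degree_le (natDegree_mul_le_of_le hA hB')
      (natDegree_mul_le_of_le hB hA')
  · have : X * (A * B' + B * A') = A * (X * B') + (X * B) * A' := by ring
    rw [this]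
    exact natDegree_add_le_of_degree_le (natDegree_mul_le_of_le hA hXB')
      (natDegree_mul_le_of_le hXB hA')
  · simp only [h, h', eval_add, eval_mul, eval_sub, eval_X]
    have := Real.sin_sq_add_cos_sq (2 * Real.pi * y)
    linear_combination (eval (Real.cos (2 * Real.pi * y)) B *
      eval (Real.cos (2 * Real.pi * y)) B') * this

open Polynomial in
lemma IsTrig.const (n : ℕ) (c : ℝ) : IsTrig n (fun _ => c) :=
  ⟨C c, 0, by simp, by simp, by simp, by simp⟩

lemma IsTrig.const_mul {n : ℕ} {f : ℝ → ℝ} (c : ℝ) (hf : IsTrig n f) :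
    IsTrig n (fun y => c * f y) := by
  simpa using (IsTrig.const 0 c).mul hf

open Polynomial in
lemma IsTrig.cos_shift (s : ℝ) :
    IsTrig 1 (fun y => Real.cos (2 * Real.pi * (y + s))) := by
  refine ⟨C (Real.cos (2 * Real.pi * s)) * X, C (-Real.sin (2 * Real.pi * s)),
    (natDegree_C_mul_le _ _).trans natDegree_X_le, by simp, ?_, fun y => ?_⟩
  · rw [mul_comm]; exact (natDegree_C_mul_le _ _).trans natDegree_X_le
  · simp only [mul_add, Real.cos_add, eval_mul, eval_C, eval_X]; ring

lemma IsTrig.sum {ι : Type*} {n : ℕ} (s : Finset ι) {f : ι → ℝ → ℝ}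
    (h : ∀ i, IsTrig n (f i)) : IsTrig n (fun y => ∑ i ∈ s, f i y) := by
  classical
  induction s using Finset.induction_on with
  | empty => simpa using IsTrig.const n 0
  | insert a s ha ih => simpa [Finset.sum_insert ha] using (h a).add ih

lemma IsTrig.prod {ι : Type*} (s : Finset ι) {f : ι → ℝ → ℝ}
    (h : ∀ i, IsTrig 1 (f i)) : IsTrig s.card (fun y => ∏ i ∈ s, f i y) := by
  classical
  induction s using Finset.induction_on with
  | empty => simpa using IsTrig.const 0 1
  | insert a s ha ih =>
    simpa [Finset.prod_insert ha, Finset.card_insert_of_notMem ha, add_comm] using (h a).mul ih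

lemma IsTrig.det {k : ℕ} {M : ℝ → Matrix (Fin k) (Fin k) ℝ}
    (h : ∀ i j, IsTrig 1 (fun y => M y i j)) : IsTrig k (fun y => (M y).det) := by
  simp only [Matrix.det_apply']
  refine IsTrig.sum _ fun σ => IsTrig.const_mul _ ?_
  simpa using IsTrig.prod Finset.univ (fun i => h (σ i) i)

open Polynomial in
lemma IsTrig.even {n : ℕ} {f : ℝ → ℝ} (hf : IsTrig n f) (he : ∀ y, f (-y) = f y) :
    ∃ c : Fin (n + 1) → ℝ, ∀ y, f y = ∑ j : Fin (n + 1),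
      c j * Real.cos (2 * Real.pi * y) ^ (j : ℕ) := by
  obtain ⟨A, B, hA, hB, hXB, h⟩ := hf
  refine ⟨fun j => A.coeff j, fun y => ?_⟩
  rw [Fin.sum_univ_eq_sum_range (fun j => A.coeff j * Real.cos (2 * Real.pi * y) ^ j),
    ← eval_eq_sum_range' (by omega)]
  have h1 := h y
  have h2 := h (-y)
  rw [he] at h2
  simp only [mul_neg, Real.cos_neg, Real.sin_neg] at h2
  linarith

lemma one_sub_mul_cos_ne {α : ℝ} (hα : α ∈ Set.Ioo (-1 : ℝ) 1) (t : ℝ) :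
    1 - α * Real.cos t ≠ 0 := by
  have h1 : |α * Real.cos t| < 1 := by
    rw [abs_mul]
    calc |α| * |Real.cos t| ≤ |α| * 1 := by gcongr; exact Real.abs_cos_le_one t
      _ < 1 := by rw [mul_one]; exact abs_lt.2 hα
  have := (abs_lt.1 h1).2
  linarith

/-- for every `k ≥ 1` and `E` there are coefficients `b₀,…,b_k` with
`P_k(x,E) = (Σ_{j=0}^k b_j cos(2π(x+(k-1)b/2))^j) / (∏_{j=0}^{k-1} (1-αcos(2π(x+jb))))`
for every `x`. -/
theorem Pdet_eq_poly_in_cos (α lam b : ℝ) (hα : α ∈ Set.Ioo (-1 : ℝ) 1)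
    (hb : Irrational b) (k : ℕ) (hk : 1 ≤ k) (E : ℝ) :
    ∃ c : Fin (k + 1) → ℝ, ∀ x : ℝ,
      Pdet (potV α lam) b k x E =
        (∑ j : Fin (k + 1),
            c j * (Real.cos (2 * Real.pi * (x + ((k : ℝ) - 1) * b / 2))) ^ (j : ℕ)) /
          (∏ j ∈ Finset.range k, (1 - α * Real.cos (2 * Real.pi * (x + (j : ℝ) * b)))) := by
  set s : ℝ := ((k : ℝ) - 1) * b / 2 with hs
  let d : ℝ → Fin k → ℝ := fun y i => 1 - α * Real.cos (2 * Real.pi * (y + (-s + (i : ℝ) * b)))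
  let M : ℝ → Matrix (Fin k) (Fin k) ℝ := fun y =>
    Matrix.of fun i j => d y i * Pmat (potV α lam) b k (y - s) E i j
  have hd : ∀ i, IsTrig 1 (fun y => d y i) := fun i => by
    simpa [d, sub_eq_add_neg] using
      (IsTrig.const 1 1).add ((IsTrig.cos_shift (-s + (i : ℝ) * b)).const_mul (-α))
  have hM : ∀ i j, IsTrig 1 (fun y => M y i j) := by
    intro i j
    by_cases hij : i = j
    · have := ((hd i).const_mul E).add
        ((IsTrig.cos_shift (-s + (i : ℝ) * b)).const_mul (-(2 * lam)))
      convert this using 2 with y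
      have h0 : d y i ≠ 0 := one_sub_mul_cos_ne hα _
      have e : y - s + (i : ℝ) * b = y + (-s + (i : ℝ) * b) := by ring
      simp only [M, Matrix.of_apply, Pmat, if_pos hij, potV, e]
      change d y i * (E - _ / d y i) = _
      field_simp
      ring
    · by_cases h2 : (i : ℤ) = (j : ℤ) + 1 ∨ (j : ℤ) = (i : ℤ) + 1
      · convert (hd i).const_mul (-1) using 2 with y
        simp only [M, Matrix.of_apply, Pmat, if_neg hij, if_pos h2]
        ring
      · convert IsTrig.const 1 0 using 2 with y
        simp only [M, Matrix.of_apply, Pmat, if_neg hij, if_neg h2]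
        ring
  have hcos : ∀ (y : ℝ) (i : Fin k), Real.cos (2 * Real.pi * (-y + (-s + (i : ℝ) * b))) =
      Real.cos (2 * Real.pi * (y + (-s + ((Fin.rev i : Fin k) : ℝ) * b))) := by
    intro y i
    rw [← Real.cos_neg]
    congr 1
    have : (((Fin.rev i : Fin k) : ℕ) : ℝ) = k - 1 - (i : ℝ) := by
      rw [Fin.val_rev, Nat.cast_sub (by omega)]; push_cast; ring
    rw [this, hs]
    ring
  have he : ∀ y, (M (-y)).det = (M y).det := by
    intro y
    rw [← Matrix.det_submatrix_equiv_self Fin.revPerm (M y)]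
    congr 1
    ext i j
    have e : ∀ (y : ℝ) (i : Fin k), y - s + (i : ℝ) * b = y + (-s + (i : ℝ) * b) := by
      intros; ring
    have h2 : ((((Fin.rev i : Fin k) : ℕ) : ℤ) = (((Fin.rev j : Fin k) : ℕ) : ℤ) + 1 ∨
        (((Fin.rev j : Fin k) : ℕ) : ℤ) = (((Fin.rev i : Fin k) : ℕ) : ℤ) + 1) ↔
        ((i : ℤ) = (j : ℤ) + 1 ∨ (j : ℤ) = (i : ℤ) + 1) := by
      simp only [Fin.val_rev]; omega
    simp only [M, d, Matrix.submatrix_apply, Matrix.of_apply, Pmat, Fin.revPerm_apply,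
      Fin.rev_inj, potV, e, hcos, h2]
  obtain ⟨c, hc⟩ := (IsTrig.det hM).even he
  refine ⟨c, fun x => ?_⟩
  rw [← hc, eq_div_iff (Finset.prod_ne_zero_iff.2 fun j _ => one_sub_mul_cos_ne hα _)]
  have hdet := Matrix.det_mul_column (d (x + s)) (Pmat (potV α lam) b k (x + s - s) E)
  simp only [M]
  rw [hdet, mul_comm, add_sub_cancel_right, Finset.prod_range]
  congr 1
  refine Finset.prod_congr rfl fun i _ => ?_
  simp only [d]
  congr 4
  ring
end
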